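/- Let a₁, a₂ ≠ 0 be real numbers whose ratio satisfies a₂/a₁ < 0, a₂/a₁ = 1, or a₂/a₁ > 4, and let s > −3/4. Then there exist b ∈ (1/2, 1), ε > 0 and C > 0, depending only on s, b and b', such that for all σ ≥ 0, all b' ∈ [b, b+ε), and all Schwartz functions f, g on ℝ²: ‖∂_x(fg)‖_{X_{a₂}^{σ,s,b'−1}} ≤ C ‖f‖_{X_{a₁}^{σ,s,b}} ‖g‖_{X_{a₂}^{σ,s,b}}. -/

import Mathlib

open MeasureTheory Set Filter
open scoped ENNReal

/-- Space-time Fourier transform `f̂(τ,ξ) = ∫∫ e^{-i(tτ + xξ)} f(t,x) dt dx`. -/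
noncomputable def FT2 (f : ℝ → ℝ → ℂ) (τ ξ : ℝ) : ℂ :=
  ∫ t : ℝ, ∫ x : ℝ, Complex.exp (-Complex.I * (t * τ + x * ξ)) * f t x

/-- Gevrey–Bourgain norm `‖f‖_{X_a^{σ,s,b}}`, valued in `ℝ≥0∞`. -/
noncomputable def XNorm (a σ s b : ℝ) (f : ℝ → ℝ → ℂ) : ℝ≥0∞ :=
  (∫⁻ τ : ℝ, ∫⁻ ξ : ℝ, ENNReal.ofReal
      (Real.exp (2 * σ * |ξ|) * (1 + |ξ|) ^ (2 * s) *
        (1 + |τ - a * ξ ^ 3|) ^ (2 * b) * ‖FT2 f τ ξ‖ ^ 2)) ^ (1/2 : ℝ)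

/-!
After moving the weights to one side, the estimate says that a weighted convolution of two
functions in `L²(ℝ²)` is in `L²`. The exponential weight costs nothing, as `|ξ| ≤ |ξ₁| + |ξ - ξ₁|`.

The modulations of the output and of the two inputs are tied by the resonance identity
`a₂ξ³ - a₁ξ₁³ - a₂(ξ - ξ₁)³ = -(τ - a₂ξ³) + (τ₁ - a₁ξ₁³) + ((τ - τ₁) - a₂(ξ - ξ₁)³)`.
The left-hand side is `ξ₁` times the quadratic form `3a₂ξ² - 3a₂ξξ₁ + (a₂ - a₁)ξ₁²`, which is
definite exactly when `a₂ / a₁ < 0` or `a₂ / a₁ > 4`, and equals `3a₂ξ(ξ - ξ₁)` when `a₂ = a₁`.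
In all cases it is at least a multiple of `|ξ ξ₁ (ξ - ξ₁)|`, so one of the three modulations is
large; when both input frequencies are at least `1`, this pays for the derivative and for the loss
of negative `s > -3/4`.

According to which modulation is the large one, the square of the kernel splits into three parts,
and by Cauchy–Schwarz it suffices to integrate each part uniformly in one of the three frequencies.
The integral in `τ` merges two modulations into one bracket of a cubic phase `αy³ - γ(y - x)³`.
Away from the critical points of the phase the integral in `y` is a change of variables; near a
critical point the weight is bounded on a strip whose width compensates it.
-/

section FourierTransform

open SchwartzMap FourierTransform

lemma FT2_eq_fourier {f : ℝ × ℝ → ℂ} (hf : Integrable f) (p : ℝ × ℝ) :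
    FT2 (fun t x => f (t, x)) p.1 p.2 =
      𝓕 (fun v : WithLp 2 (ℝ × ℝ) => f v.ofLp) (WithLp.toLp 2 ((2 * Real.pi)⁻¹ • p)) := by
  have hphase (q : ℝ × ℝ) : Complex.exp (((-2 * Real.pi * inner ℝ (WithLp.toLp 2 q)
      (WithLp.toLp 2 ((2 * Real.pi)⁻¹ • p)) : ℝ) : ℂ) * Complex.I) =
      Complex.exp (-Complex.I * (q.1 * p.1 + q.2 * p.2)) := by
    have : (Real.pi : ℂ) ≠ 0 := by exact_mod_cast Real.pi_ne_zero
    simp only [WithLp.prod_inner_apply]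
    congr 1
    simp only [Prod.smul_fst, Prod.smul_snd, smul_eq_mul, RCLike.inner_apply, Real.ringHom_apply]
    push_cast
    field_simp
  have hint : Integrable
      (fun q : ℝ × ℝ => Complex.exp (-Complex.I * (q.1 * p.1 + q.2 * p.2)) * f q) := by
    refine hf.bdd_mul (c := 1) (by fun_prop) (.of_forall fun q => ?_)
    simp [Complex.norm_exp]
  calc FT2 (fun t x => f (t, x)) p.1 p.2
      = ∫ q : ℝ × ℝ, Complex.exp (-Complex.I * (q.1 * p.1 + q.2 * p.2)) * f q :=
        (integral_prod _ hint).symm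
    _ = ∫ v : WithLp 2 (ℝ × ℝ),
          Complex.exp (-Complex.I * (v.ofLp.1 * p.1 + v.ofLp.2 * p.2)) * f v.ofLp :=
        ((WithLp.volume_preserving_ofLp ℝ ℝ).integral_comp
          (MeasurableEquiv.toLp 2 (ℝ × ℝ)).symm.measurableEmbedding _).symm
    _ = _ := by
        rw [Real.fourier_eq']
        exact integral_congr_ae (.of_forall fun v => by
          simp only [← hphase, WithLp.toLp_ofLp, smul_eq_mul])

lemma measurable_FT2 {f : ℝ → ℝ → ℂ} (hf : Measurable (Function.uncurry f)) :
    Measurable (Function.uncurry (FT2 f)) := by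
  have hinner : StronglyMeasurable fun r : (ℝ × ℝ) × ℝ =>
      ∫ x : ℝ, Complex.exp (-Complex.I * (r.2 * r.1.1 + x * r.1.2)) * f r.2 x := by
    refine StronglyMeasurable.integral_prod_right
      (f := fun (r : (ℝ × ℝ) × ℝ) (x : ℝ) =>
        Complex.exp (-Complex.I * (r.2 * r.1.1 + x * r.1.2)) * f r.2 x)
      (Measurable.stronglyMeasurable ?_)
    have : Measurable fun w : ((ℝ × ℝ) × ℝ) × ℝ => f w.1.2 w.2 :=
      hf.comp (measurable_fst.snd.prodMk measurable_snd)
    exact Measurable.mul (by fun_prop) this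
  exact hinner.integral_prod_right.measurable

lemma FT2_eq_integral_fourier (f : ℝ → ℝ → ℂ) (τ ξ : ℝ) :
    FT2 f τ ξ = ∫ t : ℝ, Complex.exp (-Complex.I * (t * τ)) * 𝓕 (f t) (ξ / (2 * Real.pi)) := by
  refine integral_congr_ae (.of_forall fun t => ?_)
  simp only [Real.fourier_real_eq_integral_exp_smul, ← integral_const_mul, smul_eq_mul,
    ← mul_assoc, ← Complex.exp_add]
  congr! 4
  push_cast
  field_simp
  ring

lemma FT2_deriv {f : ℝ → ℝ → ℂ} (hf : ∀ᵐ t, Integrable (f t))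
    (hdiff : ∀ᵐ t, Differentiable ℝ (f t)) (hderiv : ∀ᵐ t, Integrable (deriv (f t)))
    (τ ξ : ℝ) : FT2 (fun t => deriv (f t)) τ ξ = Complex.I * ξ * FT2 f τ ξ := by
  simp only [FT2_eq_integral_fourier, ← integral_const_mul]
  refine integral_congr_ae ?_
  filter_upwards [hf, hdiff, hderiv] with t ht hdt ht'
  simp only [Real.fourier_deriv ht hdt ht', smul_eq_mul]
  push_cast
  field_simp

lemma enorm_fourier_mul_le {E : Type*} [NormedAddCommGroup E] [InnerProductSpace ℝ E]
    [FiniteDimensional ℝ E] [MeasurableSpace E] [BorelSpace E] (f g : 𝓢(E, ℂ)) (x : E) :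
    ‖𝓕 (fun y => f y * g y) x‖ₑ ≤
      ∫⁻ y, ‖𝓕 (f : E → ℂ) y‖ₑ * ‖𝓕 (g : E → ℂ) (x - y)‖ₑ := by
  have hpair : SchwartzMap.convolution (ContinuousLinearMap.mul ℂ ℂ) (𝓕⁻ f) (𝓕⁻ g) =
      𝓕⁻ (pairing (ContinuousLinearMap.mul ℂ ℂ) f g) := by
    simp [SchwartzMap.convolution]
  have hconv : 𝓕 (fun y => f y * g y) x =
      SchwartzMap.convolution (ContinuousLinearMap.mul ℂ ℂ) (𝓕⁻ f) (𝓕⁻ g) (-x) := by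
    rw [hpair, fourierInv_coe, Real.fourierInv_eq_fourier_neg, neg_neg]
    rfl
  rw [hconv, SchwartzMap.convolution_apply, MeasureTheory.convolution]
  refine (enorm_integral_le_lintegral_enorm _).trans_eq ?_
  rw [← lintegral_neg_eq_self]
  refine lintegral_congr fun y => ?_
  simp only [ContinuousLinearMap.mul_apply', enorm_mul, fourierInv_coe,
    Real.fourierInv_eq_fourier_neg, neg_neg, sub_neg_eq_add, neg_add_rev]
  rw [add_comm, sub_eq_add_neg]

lemma lintegral_comp_const_smul {E : Type*} [NormedAddCommGroup E] [NormedSpace ℝ E]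
    [FiniteDimensional ℝ E] [MeasurableSpace E] [BorelSpace E] (μ : Measure E)
    [μ.IsAddHaarMeasure] (Φ : E → ℝ≥0∞) {r : ℝ} (hr : r ≠ 0) :
    ∫⁻ x, Φ (r • x) ∂μ = ENNReal.ofReal |(r ^ Module.finrank ℝ E)⁻¹| * ∫⁻ x, Φ x ∂μ := by
  have hemb : MeasurableEmbedding fun x : E => r • x :=
    (Homeomorph.smulOfNeZero r hr).measurableEmbedding
  rw [← hemb.lintegral_map, Measure.map_addHaar_smul μ hr, lintegral_smul_measure, smul_eq_mul]

lemma enorm_FT2_mul_le (f g : 𝓢(ℝ × ℝ, ℂ)) (p : ℝ × ℝ) :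
    ‖FT2 (fun t x => f (t, x) * g (t, x)) p.1 p.2‖ₑ ≤
      ∫⁻ q : ℝ × ℝ, ‖FT2 (fun t x => f (t, x)) q.1 q.2‖ₑ *
        ‖FT2 (fun t x => g (t, x)) (p - q).1 (p - q).2‖ₑ := by
  let e := WithLp.prodContinuousLinearEquiv 2 ℝ ℝ ℝ
  let F : 𝓢(WithLp 2 (ℝ × ℝ), ℂ) := compCLMOfContinuousLinearEquiv ℝ e f
  let G : 𝓢(WithLp 2 (ℝ × ℝ), ℂ) := compCLMOfContinuousLinearEquiv ℝ e g
  set c : ℝ := 2 * Real.pi with hc_def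
  have hc : c ≠ 0 := by positivity
  have hc_jac : ENNReal.ofReal |(c ^ Module.finrank ℝ (ℝ × ℝ))⁻¹| ≤ 1 := by
    have : 1 ≤ c ^ Module.finrank ℝ (ℝ × ℝ) :=
      one_le_pow₀ (by linarith [Real.pi_gt_three])
    rw [abs_of_nonneg (by positivity)]
    exact ENNReal.ofReal_le_one.2 (inv_le_one_of_one_le₀ this)
  have hfg : Integrable fun q => f q * g q :=
    (pairing (ContinuousLinearMap.mul ℝ ℂ) f g).integrable
  have hF (q : ℝ × ℝ) : 𝓕 (F : _ → ℂ) (WithLp.toLp 2 q) =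
      FT2 (fun t x => f (t, x)) (c • q).1 (c • q).2 := by
    rw [FT2_eq_fourier f.integrable, inv_smul_smul₀ hc]
    rfl
  have hG (q : ℝ × ℝ) : 𝓕 (G : _ → ℂ) (WithLp.toLp 2 (c⁻¹ • p) - WithLp.toLp 2 q) =
      FT2 (fun t x => g (t, x)) (p - c • q).1 (p - c • q).2 := by
    rw [FT2_eq_fourier g.integrable, smul_sub, inv_smul_smul₀ hc]
    rfl
  rw [FT2_eq_fourier hfg, ← hc_def]
  refine (enorm_fourier_mul_le F G _).trans ?_
  rw [← (WithLp.volume_preserving_toLp ℝ ℝ).lintegral_comp_emb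
    (MeasurableEquiv.toLp 2 (ℝ × ℝ)).measurableEmbedding]
  simp only [hF, hG]
  rw [lintegral_comp_const_smul volume (fun q : ℝ × ℝ => ‖FT2 (fun t x => f (t, x)) q.1 q.2‖ₑ *
    ‖FT2 (fun t x => g (t, x)) (p - q).1 (p - q).2‖ₑ) hc]
  exact mul_le_of_le_one_left zero_le hc_jac

lemma FT2_deriv_schwartz (h : 𝓢(ℝ × ℝ, ℂ)) (τ ξ : ℝ) :
    FT2 (fun t x => deriv (fun y => h (t, y)) x) τ ξ =
      Complex.I * ξ * FT2 (fun t x => h (t, x)) τ ξ := by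
  have hderiv (t : ℝ) : deriv (fun y => h (t, y)) =
      fun x => LineDeriv.lineDerivOp ((0 : ℝ), (1 : ℝ)) h (t, x) := by
    ext x
    rw [lineDerivOp_apply_eq_fderiv]
    exact (h.differentiableAt.hasFDerivAt.comp_hasDerivAt x
      ((hasDerivAt_const x t).prodMk (hasDerivAt_id x))).deriv
  have hslice (k : 𝓢(ℝ × ℝ, ℂ)) : ∀ᵐ t : ℝ, Integrable fun x : ℝ => k (t, x) :=
    k.integrable.prod_right_ae
  refine FT2_deriv (hslice h) (.of_forall fun t => ?_) ?_ τ ξ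
  · exact h.differentiable.comp (by fun_prop : Differentiable ℝ fun x : ℝ => (t, x))
  · simpa only [hderiv] using hslice (LineDeriv.lineDerivOp ((0 : ℝ), (1 : ℝ)) h)

lemma enorm_FT2_deriv_mul_le (f g : 𝓢(ℝ × ℝ, ℂ)) (p : ℝ × ℝ) :
    ‖FT2 (fun t x => deriv (fun y => f (t, y) * g (t, y)) x) p.1 p.2‖ₑ ≤
      ENNReal.ofReal |p.2| * ∫⁻ q : ℝ × ℝ, ‖FT2 (fun t x => f (t, x)) q.1 q.2‖ₑ *
        ‖FT2 (fun t x => g (t, x)) (p - q).1 (p - q).2‖ₑ := by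
  have hderiv : FT2 (fun t x => deriv (fun y => f (t, y) * g (t, y)) x) p.1 p.2 =
      Complex.I * p.2 * FT2 (fun t x => f (t, x) * g (t, x)) p.1 p.2 :=
    FT2_deriv_schwartz (pairing (ContinuousLinearMap.mul ℝ ℂ) f g) p.1 p.2
  have hnorm : ‖Complex.I * (p.2 : ℂ)‖ₑ = ENNReal.ofReal |p.2| := by
    rw [← ofReal_norm]
    simp
  rw [hderiv, enorm_mul, hnorm]
  gcongr
  exact enorm_FT2_mul_le f g p

end FourierTransform

section WeightedConvolution

lemma sq_lintegral_mul_le {α : Type*} [MeasurableSpace α] {μ : Measure α} {f g : α → ℝ≥0∞}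
    (hf : Measurable f) (hg : Measurable g) :
    (∫⁻ a, f a * g a ∂μ) ^ 2 ≤ (∫⁻ a, f a ^ 2 ∂μ) * ∫⁻ a, g a ^ 2 ∂μ := by
  have h := ENNReal.lintegral_mul_le_Lp_mul_Lq μ Real.HolderConjugate.two_two
    hf.aemeasurable hg.aemeasurable
  refine (pow_le_pow_left' h 2).trans_eq ?_
  simp [mul_pow, ← ENNReal.rpow_mul_natCast]

lemma eLpNorm_two_sq {α : Type*} [MeasurableSpace α] (μ : Measure α) (f : α → ℝ≥0∞) :
    eLpNorm f 2 μ ^ 2 = ∫⁻ a, f a ^ 2 ∂μ := by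
  simp [eLpNorm_eq_lintegral_rpow_enorm_toReal, ← ENNReal.rpow_mul_natCast]

variable {G : Type*} [AddCommGroup G] [MeasurableSpace G]

/-- The bilinear operator `(F, H) ↦ (x ↦ ∫ k(x, y) F(y) H(x - y) dy)`, a convolution weighted by
the kernel `k`. -/
noncomputable def weightedConv (μ : Measure G) (k : G → G → ℝ≥0∞) (F H : G → ℝ≥0∞) (x : G) :
    ℝ≥0∞ :=
  ∫⁻ y, k x y * (F y * H (x - y)) ∂μ

variable [MeasurableAdd₂ G] [MeasurableNeg G] {μ : Measure G}
  {k : G → G → ℝ≥0∞} {F H : G → ℝ≥0∞} {C : ℝ≥0∞}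

lemma measurable_weightedConv [SFinite μ] (hk : Measurable (Function.uncurry k)) (hF : Measurable F)
    (hH : Measurable H) : Measurable (weightedConv μ k F H) := by
  have : Measurable fun r : G × G => k r.1 r.2 * (F r.2 * H (r.1 - r.2)) := hk.mul (by fun_prop)
  exact this.lintegral_prod_right'

lemma eLpNorm_weightedConv_le_of_lintegral_snd [SFinite μ] [μ.IsAddLeftInvariant]
    (hk : Measurable (Function.uncurry k)) (hF : Measurable F) (hH : Measurable H)
    (hC : ∀ x, ∫⁻ y, k x y ^ 2 ∂μ ≤ C ^ 2) :
    eLpNorm (weightedConv μ k F H) 2 μ ≤ C * (eLpNorm F 2 μ * eLpNorm H 2 μ) := by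
  rw [← ENNReal.pow_le_pow_left_iff two_ne_zero]
  simp only [mul_pow, eLpNorm_two_sq]
  calc ∫⁻ x, weightedConv μ k F H x ^ 2 ∂μ
      ≤ ∫⁻ x, C ^ 2 * ∫⁻ y, (F y * H (x - y)) ^ 2 ∂μ ∂μ := by
        refine lintegral_mono fun x => (sq_lintegral_mul_le ?_ (by fun_prop)).trans ?_
        · exact hk.comp measurable_prodMk_left
        · gcongr
          exact hC x
    _ = C ^ 2 * ∫⁻ y, ∫⁻ x, F y ^ 2 * H (x - y) ^ 2 ∂μ ∂μ := by
        simp only [mul_pow]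
        rw [lintegral_const_mul _ (by fun_prop), lintegral_lintegral_swap (by fun_prop)]
    _ = C ^ 2 * ((∫⁻ y, F y ^ 2 ∂μ) * ∫⁻ z, H z ^ 2 ∂μ) := by
        have (y : G) : ∫⁻ x, F y ^ 2 * H (x - y) ^ 2 ∂μ = F y ^ 2 * ∫⁻ z, H z ^ 2 ∂μ := by
          rw [lintegral_const_mul _ (by fun_prop),
            lintegral_sub_right_eq_self (fun z => H z ^ 2) y]
        simp only [this]
        rw [lintegral_mul_const _ (by fun_prop)]

lemma eLpNorm_weightedConv_le_of_lintegral_fst [SFinite μ] [μ.IsAddLeftInvariant] [μ.IsNegInvariant]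
    (hk : Measurable (Function.uncurry k)) (hF : Measurable F) (hH : Measurable H)
    (hC : ∀ y, ∫⁻ x, k x y ^ 2 ∂μ ≤ C ^ 2) :
    eLpNorm (weightedConv μ k F H) 2 μ ≤ C * (eLpNorm F 2 μ * eLpNorm H 2 μ) := by
  rw [← ENNReal.pow_le_pow_left_iff two_ne_zero]
  simp only [mul_pow, eLpNorm_two_sq]
  have hkF (x : G) : Measurable fun y => k x y * F y := (hk.comp measurable_prodMk_left).mul hF
  have hk_fst (y : G) : Measurable fun x => k x y := hk.comp measurable_prodMk_right
  calc ∫⁻ x, weightedConv μ k F H x ^ 2 ∂μ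
      ≤ ∫⁻ x, (∫⁻ y, k x y ^ 2 * F y ^ 2 ∂μ) * ∫⁻ z, H z ^ 2 ∂μ ∂μ := by
        refine lintegral_mono fun x => ?_
        simp only [weightedConv, ← mul_assoc]
        refine (sq_lintegral_mul_le (hkF x) (by fun_prop)).trans_eq ?_
        rw [lintegral_sub_left_eq_self (fun z => H z ^ 2) x]
        simp only [mul_pow]
    _ = (∫⁻ y, (∫⁻ x, k x y ^ 2 ∂μ) * F y ^ 2 ∂μ) * ∫⁻ z, H z ^ 2 ∂μ := by
        have hmeas : Measurable fun r : G × G => k r.1 r.2 ^ 2 * F r.2 ^ 2 :=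
          (hk.pow_const 2).mul (by fun_prop)
        rw [lintegral_mul_const _ hmeas.lintegral_prod_right',
          lintegral_lintegral_swap hmeas.aemeasurable]
        congr! 3 with y
        exact lintegral_mul_const (F y ^ 2) ((hk_fst y).pow_const 2)
    _ ≤ (∫⁻ y, C ^ 2 * F y ^ 2 ∂μ) * ∫⁻ z, H z ^ 2 ∂μ := by
        gcongr with y
        exact hC y
    _ = C ^ 2 * ((∫⁻ y, F y ^ 2 ∂μ) * ∫⁻ z, H z ^ 2 ∂μ) := by
        rw [lintegral_const_mul _ (by fun_prop), mul_assoc]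

lemma weightedConv_swap [μ.IsAddLeftInvariant] [μ.IsNegInvariant]
    (k : G → G → ℝ≥0∞) (F H : G → ℝ≥0∞) :
    weightedConv μ k F H = weightedConv μ (fun x y => k x (x - y)) H F := by
  ext x
  rw [weightedConv, weightedConv, ← lintegral_sub_left_eq_self _ x]
  simp only [sub_sub_cancel, mul_comm (F _)]

lemma eLpNorm_weightedConv_le_of_lintegral_sub [SFinite μ] [μ.IsAddLeftInvariant] [μ.IsNegInvariant]
    (hk : Measurable (Function.uncurry k)) (hF : Measurable F) (hH : Measurable H)
    (hC : ∀ z, ∫⁻ x, k x (x - z) ^ 2 ∂μ ≤ C ^ 2) :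
    eLpNorm (weightedConv μ k F H) 2 μ ≤ C * (eLpNorm F 2 μ * eLpNorm H 2 μ) := by
  rw [weightedConv_swap, mul_comm (eLpNorm F 2 μ)]
  exact eLpNorm_weightedConv_le_of_lintegral_fst
    (hk.comp (measurable_fst.prodMk (measurable_fst.sub measurable_snd))) hH hF hC

lemma weightedConv_le_add {k₁ k₂ : G → G → ℝ≥0∞}
    (hk₁ : Measurable (Function.uncurry k₁)) (hF : Measurable F) (hH : Measurable H)
    (hle : ∀ x y, k x y ≤ k₁ x y + k₂ x y) (x : G) :
    weightedConv μ k F H x ≤ weightedConv μ k₁ F H x + weightedConv μ k₂ F H x := by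
  have : Measurable fun y => k₁ x y * (F y * H (x - y)) :=
    (hk₁.comp measurable_prodMk_left).mul (by fun_prop)
  rw [weightedConv, weightedConv, weightedConv, ← lintegral_add_left this]
  refine lintegral_mono fun y => ?_
  rw [← add_mul]
  gcongr
  exact hle x y

lemma eLpNorm_weightedConv_le_of_sq_le_add [SFinite μ] [μ.IsAddLeftInvariant]
    [μ.IsNegInvariant] {T₀ T₁ T₂ : G → G → ℝ≥0∞}
    (hT₀ : Measurable (Function.uncurry T₀)) (hT₁ : Measurable (Function.uncurry T₁))
    (hT₂ : Measurable (Function.uncurry T₂)) (hF : Measurable F) (hH : Measurable H)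
    (hle : ∀ x y, k x y ^ 2 ≤ T₀ x y + T₁ x y + T₂ x y)
    (hC₀ : ∀ x, ∫⁻ y, T₀ x y ∂μ ≤ C ^ 2) (hC₁ : ∀ y, ∫⁻ x, T₁ x y ∂μ ≤ C ^ 2)
    (hC₂ : ∀ z, ∫⁻ x, T₂ x (x - z) ∂μ ≤ C ^ 2) :
    eLpNorm (weightedConv μ k F H) 2 μ ≤ 3 * C * (eLpNorm F 2 μ * eLpNorm H 2 μ) := by
  let r (T : G → G → ℝ≥0∞) (x y : G) : ℝ≥0∞ := T x y ^ (1 / 2 : ℝ)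
  have hr_sq (T : G → G → ℝ≥0∞) (x y : G) : r T x y ^ 2 = T x y := by
    simp [r, ← ENNReal.rpow_mul_natCast]
  have hr {T : G → G → ℝ≥0∞} (hT : Measurable (Function.uncurry T)) :
      Measurable (Function.uncurry (r T)) := hT.pow_const _
  have hconv {T : G → G → ℝ≥0∞} (hT : Measurable (Function.uncurry T)) :
      AEStronglyMeasurable (weightedConv μ (r T) F H) μ :=
    (measurable_weightedConv (hr hT) hF hH).aestronglyMeasurable
  have hk (x y : G) : k x y ≤ r T₀ x y + (r T₁ x y + r T₂ x y) := by
    have hsqrt (a b : ℝ≥0∞) := ENNReal.rpow_add_le_add_rpow a b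
      (by norm_num : (0 : ℝ) ≤ 1 / 2) (by norm_num)
    calc k x y = (k x y ^ 2) ^ (1 / 2 : ℝ) := by simp [← ENNReal.rpow_natCast_mul]
      _ ≤ (T₀ x y + (T₁ x y + T₂ x y)) ^ (1 / 2 : ℝ) := by
          rw [← add_assoc]
          gcongr
          exact hle x y
      _ ≤ r T₀ x y + (r T₁ x y + r T₂ x y) := (hsqrt _ _).trans (by gcongr; exact hsqrt _ _)
  calc eLpNorm (weightedConv μ k F H) 2 μ
      ≤ eLpNorm (weightedConv μ (r T₀) F H +
          (weightedConv μ (r T₁) F H + weightedConv μ (r T₂) F H)) 2 μ :=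
        eLpNorm_mono_enorm fun x => (weightedConv_le_add (hr hT₀) hF hH hk x).trans
          (add_le_add_right (weightedConv_le_add (hr hT₁) hF hH (fun _ _ => le_rfl) x) _)
    _ ≤ eLpNorm (weightedConv μ (r T₀) F H) 2 μ +
          (eLpNorm (weightedConv μ (r T₁) F H) 2 μ + eLpNorm (weightedConv μ (r T₂) F H) 2 μ) :=
        (eLpNorm_add_le (hconv hT₀) ((hconv hT₁).add (hconv hT₂)) one_le_two).trans
          (add_le_add_right (eLpNorm_add_le (hconv hT₁) (hconv hT₂) one_le_two) _)
    _ ≤ C * (eLpNorm F 2 μ * eLpNorm H 2 μ) + (C * (eLpNorm F 2 μ * eLpNorm H 2 μ) +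
          C * (eLpNorm F 2 μ * eLpNorm H 2 μ)) := by
        gcongr
        · exact eLpNorm_weightedConv_le_of_lintegral_snd (hr hT₀) hF hH (by simpa only [hr_sq])
        · exact eLpNorm_weightedConv_le_of_lintegral_fst (hr hT₁) hF hH (by simpa only [hr_sq])
        · exact eLpNorm_weightedConv_le_of_lintegral_sub (hr hT₂) hF hH (by simpa only [hr_sq])
    _ = 3 * C * (eLpNorm F 2 μ * eLpNorm H 2 μ) := by ring

end WeightedConvolution

section PhaseIntegrals

/-- The integral `∫ ⟨v⟩^{-β} dv` of a power of the Japanese bracket `⟨v⟩ = 1 + |v|`. -/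
noncomputable def bracketIntegral (β : ℝ) : ℝ≥0∞ :=
  ∫⁻ v : ℝ, ENNReal.ofReal ((1 + |v|) ^ (-β))

lemma bracketIntegral_lt_top {β : ℝ} (hβ : 1 < β) : bracketIntegral β < ∞ := by
  simpa [bracketIntegral] using
    (integrable_one_add_norm (E := ℝ) (μ := volume) (r := β) (by simpa using hβ)).lintegral_lt_top

lemma lintegral_bracket_sub (β t : ℝ) :
    ∫⁻ v : ℝ, ENNReal.ofReal ((1 + |v - t|) ^ (-β)) = bracketIntegral β :=
  lintegral_sub_right_eq_self (fun v : ℝ => ENNReal.ofReal ((1 + |v|) ^ (-β))) t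

lemma bracket_rpow_neg_le {β u v : ℝ} (hβ : 0 ≤ β) (huv : |u| ≤ |v|) :
    (1 + |v|) ^ (-β) ≤ 2 ^ β * (1 + |u - v|) ^ (-β) := by
  have htri : 1 + |u - v| ≤ 2 * (1 + |v|) := by linarith [abs_sub u v]
  calc (1 + |v|) ^ (-β) = 2 ^ β * (2 * (1 + |v|)) ^ (-β) := by
        rw [Real.mul_rpow zero_le_two (by positivity), ← mul_assoc, ← Real.rpow_add two_pos,
          add_neg_cancel, Real.rpow_zero, one_mul]
    _ ≤ 2 ^ β * (1 + |u - v|) ^ (-β) :=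
        mul_le_mul_of_nonneg_left
          (Real.rpow_le_rpow_of_nonpos (by positivity) htri (neg_nonpos.2 hβ)) (by positivity)

lemma bracket_rpow_neg_mul_le {β : ℝ} (hβ : 0 ≤ β) (u v : ℝ) :
    (1 + |u|) ^ (-β) * (1 + |v|) ^ (-β) ≤
      2 ^ β * (1 + |u - v|) ^ (-β) * ((1 + |u|) ^ (-β) + (1 + |v|) ^ (-β)) := by
  have hu : 0 ≤ (1 + |u|) ^ (-β) := by positivity
  have hv : 0 ≤ (1 + |v|) ^ (-β) := by positivity
  have huv : 0 ≤ 2 ^ β * (1 + |u - v|) ^ (-β) := by positivity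
  rcases le_total |u| |v| with h | h
  · nlinarith [bracket_rpow_neg_le hβ h]
  · have := bracket_rpow_neg_le hβ h
    rw [abs_sub_comm] at this
    nlinarith

lemma lintegral_bracket_mul_bracket_le {β : ℝ} (hβ : 0 ≤ β) (a b : ℝ) :
    ∫⁻ v : ℝ, ENNReal.ofReal ((1 + |v - a|) ^ (-β) * (1 + |v - b|) ^ (-β)) ≤
      ENNReal.ofReal (2 ^ β) * (2 * bracketIntegral β) *
        ENNReal.ofReal ((1 + |a - b|) ^ (-β)) := by
  calc ∫⁻ v : ℝ, ENNReal.ofReal ((1 + |v - a|) ^ (-β) * (1 + |v - b|) ^ (-β))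
      ≤ ∫⁻ v : ℝ, ENNReal.ofReal (2 ^ β * (1 + |a - b|) ^ (-β)) *
          (ENNReal.ofReal ((1 + |v - a|) ^ (-β)) + ENNReal.ofReal ((1 + |v - b|) ^ (-β))) := by
        refine lintegral_mono fun v => ?_
        rw [← ENNReal.ofReal_add (by positivity) (by positivity),
          ← ENNReal.ofReal_mul (by positivity)]
        apply ENNReal.ofReal_le_ofReal
        have h := bracket_rpow_neg_mul_le hβ (v - a) (v - b)
        rwa [sub_sub_sub_cancel_left, abs_sub_comm b a] at h
    _ = ENNReal.ofReal (2 ^ β) * (2 * bracketIntegral β) *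
          ENNReal.ofReal ((1 + |a - b|) ^ (-β)) := by
        rw [lintegral_const_mul _ (by fun_prop), lintegral_add_left (by fun_prop),
          lintegral_bracket_sub, lintegral_bracket_sub, ENNReal.ofReal_mul (by positivity)]
        ring

lemma setLIntegral_abs_deriv_mul_comp_le {T : Set ℝ} (hT : MeasurableSet T) {φ φ' : ℝ → ℝ}
    (hφ : ∀ y, HasDerivAt φ (φ' y) y) (hinj : InjOn φ T) (g : ℝ → ℝ≥0∞) :
    ∫⁻ y in T, ENNReal.ofReal |φ' y| * g (φ y) ≤ ∫⁻ v, g v := by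
  rw [← lintegral_image_eq_lintegral_abs_deriv_mul hT (fun y _ => (hφ y).hasDerivWithinAt) hinj]
  exact setLIntegral_le_lintegral _ _

lemma injOn_inter_deriv_pos {T : Set ℝ} {φ φ' : ℝ → ℝ} (hφ : ∀ y, HasDerivAt φ (φ' y) y)
    (hT : OrdConnected (T ∩ φ' ⁻¹' Ioi 0)) : InjOn φ (T ∩ φ' ⁻¹' Ioi 0) := by
  have hcont : Continuous φ := continuous_iff_continuousAt.2 fun y => (hφ y).continuousAt
  refine (strictMonoOn_of_deriv_pos hT.convex hcont.continuousOn fun x hx => ?_).injOn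
  rw [(hφ x).deriv]
  exact (interior_subset hx).2

lemma injOn_inter_deriv_neg {T : Set ℝ} {φ φ' : ℝ → ℝ} (hφ : ∀ y, HasDerivAt φ (φ' y) y)
    (hT : OrdConnected (T ∩ φ' ⁻¹' Iio 0)) : InjOn φ (T ∩ φ' ⁻¹' Iio 0) := by
  have hcont : Continuous φ := continuous_iff_continuousAt.2 fun y => (hφ y).continuousAt
  refine (strictAntiOn_of_deriv_neg hT.convex hcont.continuousOn fun x hx => ?_).injOn
  rw [(hφ x).deriv]
  exact (interior_subset hx).2

lemma setLIntegral_abs_deriv_mul_comp_le_two {T : Set ℝ} (hT : MeasurableSet T)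
    (hT_conn : OrdConnected T) {φ φ' : ℝ → ℝ} (hφ : ∀ y, HasDerivAt φ (φ' y) y)
    (hφ' : Measurable φ') (hmono : MonotoneOn φ' T ∨ AntitoneOn φ' T) (g : ℝ → ℝ≥0∞) :
    ∫⁻ y in T, ENNReal.ofReal |φ' y| * g (φ y) ≤ 2 * ∫⁻ v, g v := by
  have hconn {U : Set ℝ} (hU : OrdConnected U) : OrdConnected (T ∩ φ' ⁻¹' U) := by
    obtain ⟨I, hI, hTI⟩ := hmono.elim hU.preimage_monotoneOn hU.preimage_antitoneOn
    exact hTI ▸ hT_conn.inter hI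
  have hzero : ∫⁻ y in T ∩ φ' ⁻¹' {0}, ENNReal.ofReal |φ' y| * g (φ y) = 0 := by
    rw [setLIntegral_congr_fun (g := 0) (hT.inter (hφ' (measurableSet_singleton 0)))
      fun y hy => by simp [show φ' y = 0 from hy.2]]
    simp
  have hpos := setLIntegral_abs_deriv_mul_comp_le (hT.inter (hφ' measurableSet_Ioi)) hφ
    (injOn_inter_deriv_pos hφ (hconn ordConnected_Ioi)) g
  have hneg := setLIntegral_abs_deriv_mul_comp_le (hT.inter (hφ' measurableSet_Iio)) hφ
    (injOn_inter_deriv_neg hφ (hconn ordConnected_Iio)) g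
  have hcover : T ⊆ (T ∩ φ' ⁻¹' {0}) ∪ ((T ∩ φ' ⁻¹' Ioi 0) ∪ (T ∩ φ' ⁻¹' Iio 0)) := fun y hy => by
    rcases lt_trichotomy (φ' y) 0 with h | h | h <;> simp [hy, h]
  calc ∫⁻ y in T, ENNReal.ofReal |φ' y| * g (φ y)
      ≤ (∫⁻ y in T ∩ φ' ⁻¹' {0}, ENNReal.ofReal |φ' y| * g (φ y)) +
          ((∫⁻ y in T ∩ φ' ⁻¹' Ioi 0, ENNReal.ofReal |φ' y| * g (φ y)) +
            ∫⁻ y in T ∩ φ' ⁻¹' Iio 0, ENNReal.ofReal |φ' y| * g (φ y)) :=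
        (lintegral_mono_set hcover).trans <| (lintegral_union_le _ _ _).trans <|
          add_le_add_right (lintegral_union_le _ _ _) _
    _ ≤ 0 + ((∫⁻ v, g v) + ∫⁻ v, g v) := by gcongr; exact hzero.le
    _ = 2 * ∫⁻ v, g v := by ring

lemma ordConnected_affine_nonneg (m k : ℝ) : OrdConnected {y : ℝ | 0 ≤ m * y + k} := by
  refine ⟨fun x hx y hy z hz => ?_⟩
  simp only [mem_ofPred_eq] at *
  rcases le_total 0 m with h | h
  · linarith [mul_le_mul_of_nonneg_left hz.1 h]
  · linarith [mul_le_mul_of_nonpos_left hz.2 h]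

lemma monotoneOn_quadratic (A B D : ℝ) :
    MonotoneOn (fun y : ℝ => A * y ^ 2 + B * y + D) {y | 0 ≤ 2 * A * y + B} := by
  intro y hy z hz hyz
  simp only [mem_ofPred_eq] at *
  nlinarith [mul_nonneg (sub_nonneg.2 hyz) (add_nonneg hy hz)]

lemma lintegral_abs_quadratic_deriv_mul_comp_le {φ : ℝ → ℝ} {A B D : ℝ}
    (hφ : ∀ y, HasDerivAt φ (A * y ^ 2 + B * y + D) y) (g : ℝ → ℝ≥0∞) :
    ∫⁻ y, ENNReal.ofReal |A * y ^ 2 + B * y + D| * g (φ y) ≤ 4 * ∫⁻ v, g v := by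
  let Tinc : Set ℝ := {y | 0 ≤ 2 * A * y + B}
  let Tdec : Set ℝ := {y | 0 ≤ 2 * -A * y + -B}
  have hmeas : Measurable fun y : ℝ => A * y ^ 2 + B * y + D := by fun_prop
  have hdec : AntitoneOn (fun y : ℝ => A * y ^ 2 + B * y + D) Tdec := fun y hy z hz hyz => by
    linarith [monotoneOn_quadratic (-A) (-B) (-D) hy hz hyz]
  have hcover : Tinc ∪ Tdec = univ := eq_univ_of_forall fun y => by
    rcases le_total 0 (2 * A * y + B) with h | h
    · exact .inl h
    · exact .inr (by simp only [Tdec, mem_ofPred_eq]; linarith)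
  have hint_inc := setLIntegral_abs_deriv_mul_comp_le_two
    (measurableSet_le measurable_const (by fun_prop)) (ordConnected_affine_nonneg (2 * A) B)
    hφ hmeas (.inl (monotoneOn_quadratic A B D)) g
  have hint_dec := setLIntegral_abs_deriv_mul_comp_le_two
    (measurableSet_le measurable_const (by fun_prop)) (ordConnected_affine_nonneg (2 * -A) (-B))
    hφ hmeas (.inr hdec) g
  calc ∫⁻ y, ENNReal.ofReal |A * y ^ 2 + B * y + D| * g (φ y)
      = ∫⁻ y in Tinc ∪ Tdec, ENNReal.ofReal |A * y ^ 2 + B * y + D| * g (φ y) := by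
        rw [hcover, setLIntegral_univ]
    _ ≤ 2 * (∫⁻ v, g v) + 2 * ∫⁻ v, g v :=
        (lintegral_union_le _ _ _).trans (add_le_add hint_inc hint_dec)
    _ = 4 * ∫⁻ v, g v := by ring

end PhaseIntegrals

section PhaseAdapted

/-- The modulation weight `⟨τ - aξ³⟩` of the space-time frequency `p = (τ, ξ)`. -/
def modulation (a : ℝ) (p : ℝ × ℝ) : ℝ := 1 + |p.1 - a * p.2 ^ 3|

lemma one_le_modulation (a : ℝ) (p : ℝ × ℝ) : 1 ≤ modulation a p :=
  le_add_of_nonneg_right (abs_nonneg _)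

lemma modulation_pos (a : ℝ) (p : ℝ × ℝ) : 0 < modulation a p :=
  one_pos.trans_le (one_le_modulation a p)

lemma measurable_modulation (a : ℝ) : Measurable (modulation a) := by
  unfold modulation
  fun_prop

lemma modulation_neg (a : ℝ) (p : ℝ × ℝ) : modulation a (-p) = modulation a p := by
  have : (-p).1 - a * (-p).2 ^ 3 = -(p.1 - a * p.2 ^ 3) := by
    simp only [Prod.fst_neg, Prod.snd_neg]
    ring
  rw [modulation, this, abs_neg, modulation]

/-- The weight `W x y` is adapted to the phases `φ_x(y) = αy³ - γ(y - x)³`: up to a constant it is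
dominated either by `|φ_x'(y)|`, or by the reciprocal of the width of a strip around one of
finitely many lines `y = cx` containing `(x, y)`. -/
def IsPhaseAdapted (α γ : ℝ) (W : ℝ → ℝ → ℝ) : Prop :=
  ∃ C, 0 ≤ C ∧ ∃ S : Finset ℝ, ∀ x y, W x y ≤ C * |α * y ^ 2 - γ * (y - x) ^ 2| ∨
    (W x y ≤ C * √(1 + |x|) ∧ ∃ c ∈ S, |y - c * x| ≤ C / √(1 + |x|))

/-- The weight `W` of the frequencies of `p₀ = (τ₀, ξ₀)` and `p = (τ, ξ)`, with decay of order `β`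
in the modulations `⟨τ - αξ³⟩` and `⟨(τ - τ₀) - γ(ξ - ξ₀)³⟩`. -/
noncomputable def phaseKernel (α γ β : ℝ) (W : ℝ → ℝ → ℝ) (p₀ p : ℝ × ℝ) : ℝ :=
  W p₀.2 p.2 * (modulation α p ^ (-β) * modulation γ (p - p₀) ^ (-β))

variable {α γ : ℝ} {W : ℝ → ℝ → ℝ}

lemma measurable_phaseKernel (α γ β : ℝ) (hW : Measurable (Function.uncurry W)) :
    Measurable (Function.uncurry (phaseKernel α γ β W)) :=
  (hW.comp (by fun_prop : Measurable fun z : (ℝ × ℝ) × (ℝ × ℝ) => (z.1.2, z.2.2))).mul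
    ((((measurable_modulation α).comp measurable_snd).pow_const _).mul
      (((measurable_modulation γ).comp (measurable_snd.sub measurable_fst)).pow_const _))

lemma hasDerivAt_phase (α γ x y : ℝ) :
    HasDerivAt (fun y => α * y ^ 3 - γ * (y - x) ^ 3)
      (3 * (α - γ) * y ^ 2 + 6 * γ * x * y + -3 * γ * x ^ 2) y := by
  refine ((((hasDerivAt_id y).pow 3).const_mul α).sub
    ((((hasDerivAt_id y).sub_const x).pow 3).const_mul γ)).congr_deriv ?_
  simp only [Nat.cast_ofNat, id_eq, Nat.add_one_sub_one, mul_one]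
  ring

lemma lintegral_abs_phase_mul_comp_le (α γ x : ℝ) (g : ℝ → ℝ≥0∞) :
    ∫⁻ y, ENNReal.ofReal |α * y ^ 2 - γ * (y - x) ^ 2| * g (α * y ^ 3 - γ * (y - x) ^ 3) ≤
      4 * ∫⁻ v, g v := by
  refine le_trans (lintegral_mono fun y => ?_)
    (lintegral_abs_quadratic_deriv_mul_comp_le (hasDerivAt_phase α γ x) g)
  have hderiv : 3 * (α - γ) * y ^ 2 + 6 * γ * x * y + -3 * γ * x ^ 2 =
      3 * (α * y ^ 2 - γ * (y - x) ^ 2) := by ring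
  rw [hderiv, abs_mul, abs_of_pos (zero_lt_three' ℝ)]
  gcongr
  linarith [abs_nonneg (α * y ^ 2 - γ * (y - x) ^ 2)]

lemma lintegral_indicator_closedBall_reciprocal {C M : ℝ} (hC : 0 ≤ C) (hM : 0 < M) (a : ℝ) :
    ∫⁻ y, (Metric.closedBall a (C / M)).indicator (fun _ => ENNReal.ofReal (C * M)) y =
      2 * ENNReal.ofReal (C ^ 2) := by
  rw [lintegral_indicator Metric.isClosed_closedBall.measurableSet, setLIntegral_const,
    Real.volume_closedBall, ← ENNReal.ofReal_mul (by positivity), ← ENNReal.ofReal_ofNat 2,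
    ← ENNReal.ofReal_mul zero_le_two]
  congr 1
  field_simp

lemma IsPhaseAdapted.exists_lintegral_mul_comp_le (hW : IsPhaseAdapted α γ W) {g : ℝ → ℝ≥0∞}
    (hg : ∀ v, g v ≤ 1) (hg_int : ∫⁻ v, g v ≠ ∞) :
    ∃ B ≠ ∞, ∀ x t, ∫⁻ y, ENNReal.ofReal (W x y) * g (α * y ^ 3 - γ * (y - x) ^ 3 - t) ≤ B := by
  obtain ⟨C, hC, S, hW⟩ := hW
  refine ⟨ENNReal.ofReal C * (4 * ∫⁻ v, g v) + S.card * (2 * ENNReal.ofReal (C ^ 2)),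
    by finiteness, fun x t => ?_⟩
  have hM : 0 < √(1 + |x|) := by positivity
  let strip (c : ℝ) : ℝ → ℝ≥0∞ := (Metric.closedBall (c * x) (C / √(1 + |x|))).indicator
    fun _ => ENNReal.ofReal (C * √(1 + |x|))
  let phasePart (y : ℝ) : ℝ≥0∞ := ENNReal.ofReal |α * y ^ 2 - γ * (y - x) ^ 2| *
    g (α * y ^ 3 - γ * (y - x) ^ 3 - t)
  have hstrip (c : ℝ) : Measurable (strip c) :=
    measurable_const.indicator Metric.isClosed_closedBall.measurableSet
  have hdom (y : ℝ) : ENNReal.ofReal (W x y) * g (α * y ^ 3 - γ * (y - x) ^ 3 - t) ≤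
      ENNReal.ofReal C * phasePart y + ∑ c ∈ S, strip c y := by
    rcases hW x y with h | ⟨h, c, hc, hcy⟩
    · refine le_add_right ?_
      rw [← mul_assoc, ← ENNReal.ofReal_mul hC]
      gcongr
    · refine le_add_left (le_trans ?_ (Finset.single_le_sum (fun _ _ => zero_le) hc))
      have hy : y ∈ Metric.closedBall (c * x) (C / √(1 + |x|)) :=
        Metric.mem_closedBall.2 (by rwa [Real.dist_eq])
      rw [show strip c y = _ from indicator_of_mem hy _, ← mul_one (ENNReal.ofReal (C * _))]
      gcongr
      exact hg _
  calc ∫⁻ y, ENNReal.ofReal (W x y) * g (α * y ^ 3 - γ * (y - x) ^ 3 - t)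
      ≤ ENNReal.ofReal C * (∫⁻ y, phasePart y) + ∑ c ∈ S, ∫⁻ y, strip c y := by
        refine (lintegral_mono hdom).trans_eq ?_
        rw [lintegral_add_right _ (by fun_prop), lintegral_const_mul' _ _ ENNReal.ofReal_ne_top,
          lintegral_finsetSum _ fun c _ => hstrip c]
    _ ≤ ENNReal.ofReal C * (4 * ∫⁻ v, g v) + S.card * (2 * ENNReal.ofReal (C ^ 2)) := by
        simp only [strip, lintegral_indicator_closedBall_reciprocal hC hM, Finset.sum_const,
          nsmul_eq_mul]
        gcongr
        rw [← lintegral_sub_right_eq_self g t]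
        exact lintegral_abs_phase_mul_comp_le α γ x fun v => g (v - t)

lemma lintegral_phaseKernel_fst_le {β : ℝ} (hβ : 0 ≤ β) (p₀ : ℝ × ℝ) (y : ℝ) :
    ∫⁻ τ, ENNReal.ofReal (phaseKernel α γ β W p₀ (τ, y)) ≤
      ENNReal.ofReal (2 ^ β) * (2 * bracketIntegral β) * (ENNReal.ofReal (W p₀.2 y) *
        ENNReal.ofReal ((1 + |α * y ^ 3 - γ * (y - p₀.2) ^ 3 - p₀.1|) ^ (-β))) := by
  have hnonneg (τ : ℝ) : 0 ≤ modulation α (τ, y) ^ (-β) * modulation γ ((τ, y) - p₀) ^ (-β) :=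
    mul_nonneg (Real.rpow_nonneg (modulation_pos _ _).le _)
      (Real.rpow_nonneg (modulation_pos _ _).le _)
  have hmod (τ : ℝ) : modulation γ ((τ, y) - p₀) = 1 + |τ - (p₀.1 + γ * (y - p₀.2) ^ 3)| := by
    rw [modulation, Prod.fst_sub, Prod.snd_sub, sub_sub]
  have h := lintegral_bracket_mul_bracket_le hβ (α * y ^ 3) (p₀.1 + γ * (y - p₀.2) ^ 3)
  simp only [phaseKernel, ENNReal.ofReal_mul' (hnonneg _)]
  rw [lintegral_const_mul' _ _ ENNReal.ofReal_ne_top, mul_left_comm]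
  simp only [hmod]
  gcongr
  rwa [← sub_sub, sub_right_comm] at h

lemma IsPhaseAdapted.exists_lintegral_phaseKernel_le (hW : IsPhaseAdapted α γ W)
    (hW_meas : Measurable (Function.uncurry W)) {β : ℝ} (hβ : 1 < β) :
    ∃ B ≠ ∞, ∀ p₀, ∫⁻ p, ENNReal.ofReal (phaseKernel α γ β W p₀ p) ≤ B := by
  have hbracket (v : ℝ) : ENNReal.ofReal ((1 + |v|) ^ (-β)) ≤ 1 :=
    ENNReal.ofReal_le_one.2 <|
      Real.rpow_le_one_of_one_le_of_nonpos (by linarith [abs_nonneg v]) (by linarith)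
  have hJ := (bracketIntegral_lt_top hβ).ne
  obtain ⟨B, hB, hWB⟩ := hW.exists_lintegral_mul_comp_le hbracket hJ
  refine ⟨ENNReal.ofReal (2 ^ β) * (2 * bracketIntegral β) * B, by finiteness, fun p₀ => ?_⟩
  have hmeas : Measurable (phaseKernel α γ β W p₀) :=
    (measurable_phaseKernel α γ β hW_meas).of_uncurry_left
  rw [Measure.volume_eq_prod, lintegral_prod_symm' _ hmeas.ennreal_ofReal]
  refine (lintegral_mono fun y => lintegral_phaseKernel_fst_le (by linarith) p₀ y).trans ?_
  rw [lintegral_const_mul' _ _ (by finiteness)]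
  gcongr
  exact hWB _ _

lemma exists_eLpNorm_weightedConv_le_of_sq_le_phaseKernel {α₀ γ₀ α₁ γ₁ α₂ γ₂ β : ℝ}
    {W₀ W₁ W₂ : ℝ → ℝ → ℝ} (hW₀ : IsPhaseAdapted α₀ γ₀ W₀) (hW₁ : IsPhaseAdapted α₁ γ₁ W₁)
    (hW₂ : IsPhaseAdapted α₂ γ₂ W₂) (hW₀_meas : Measurable (Function.uncurry W₀))
    (hW₁_meas : Measurable (Function.uncurry W₁)) (hW₂_meas : Measurable (Function.uncurry W₂))
    (hβ : 1 < β) :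
    ∃ C : ℝ≥0∞, C ≠ ∞ ∧ ∀ (k : ℝ × ℝ → ℝ × ℝ → ℝ) (F H : ℝ × ℝ → ℝ≥0∞),
      Measurable F → Measurable H →
      (∀ p q, k p q ^ 2 ≤ phaseKernel α₀ γ₀ β W₀ p q + phaseKernel α₁ γ₁ β W₁ q p +
        phaseKernel α₂ γ₂ β W₂ (p - q) p) →
      eLpNorm (weightedConv volume (fun p q => ENNReal.ofReal (k p q)) F H) 2 volume ≤
        C * (eLpNorm F 2 volume * eLpNorm H 2 volume) := by
  obtain ⟨B₀, hB₀, h₀⟩ := hW₀.exists_lintegral_phaseKernel_le hW₀_meas hβ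
  obtain ⟨B₁, hB₁, h₁⟩ := hW₁.exists_lintegral_phaseKernel_le hW₁_meas hβ
  obtain ⟨B₂, hB₂, h₂⟩ := hW₂.exists_lintegral_phaseKernel_le hW₂_meas hβ
  have hsqrt : ((B₀ + B₁ + B₂) ^ (1 / 2 : ℝ)) ^ 2 = B₀ + B₁ + B₂ := by
    simp [← ENNReal.rpow_mul_natCast]
  refine ⟨3 * (B₀ + B₁ + B₂) ^ (1 / 2 : ℝ), by finiteness, fun k F H hF hH hk => ?_⟩
  refine eLpNorm_weightedConv_le_of_sq_le_add
    (T₀ := fun p q => ENNReal.ofReal (phaseKernel α₀ γ₀ β W₀ p q))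
    (T₁ := fun p q => ENNReal.ofReal (phaseKernel α₁ γ₁ β W₁ q p))
    (T₂ := fun p q => ENNReal.ofReal (phaseKernel α₂ γ₂ β W₂ (p - q) p))
    (measurable_phaseKernel α₀ γ₀ β hW₀_meas).ennreal_ofReal
    ((measurable_phaseKernel α₁ γ₁ β hW₁_meas).comp measurable_swap).ennreal_ofReal
    ((measurable_phaseKernel α₂ γ₂ β hW₂_meas).comp
      (by fun_prop : Measurable fun z : (ℝ × ℝ) × (ℝ × ℝ) => (z.1 - z.2, z.1))).ennreal_ofReal
    hF hH (fun p q => ?_) (fun p => ?_) (fun q => ?_) (fun z => ?_)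
  · calc ENNReal.ofReal (k p q) ^ 2 ≤ ENNReal.ofReal |k p q| ^ 2 := by
          gcongr
          exact le_abs_self _
      _ = ENNReal.ofReal (k p q ^ 2) := by rw [← ENNReal.ofReal_pow (abs_nonneg _), sq_abs]
      _ ≤ _ := (ENNReal.ofReal_le_ofReal (hk p q)).trans <|
          ENNReal.ofReal_add_le.trans (add_le_add_left ENNReal.ofReal_add_le _)
  · rw [hsqrt]
    exact (h₀ p).trans (le_self_add.trans le_self_add)
  · rw [hsqrt]
    exact (h₁ q).trans (le_add_self.trans le_self_add)
  · rw [hsqrt]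
    simp only [sub_sub_cancel]
    exact (h₂ z).trans le_add_self

end PhaseAdapted

section PhaseTransversality

variable {α γ : ℝ} {W W₁ W₂ : ℝ → ℝ → ℝ}

lemma IsPhaseAdapted.const_mul (hW : IsPhaseAdapted α γ W) {K : ℝ} (hK : 0 ≤ K) :
    IsPhaseAdapted α γ fun x y => K * W x y := by
  obtain ⟨C, hC, S, hW⟩ := hW
  have hscale {w z : ℝ} (hz : 0 ≤ z) (h : w ≤ C * z) : K * w ≤ (K + 1) * C * z := by
    nlinarith [mul_le_mul_of_nonneg_left h hK, mul_nonneg hC hz]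
  refine ⟨(K + 1) * C, by positivity, S, fun x y => ?_⟩
  rcases hW x y with h | ⟨h, c, hc, hcy⟩
  · exact .inl (hscale (abs_nonneg _) h)
  · refine .inr ⟨hscale (Real.sqrt_nonneg _) h, c, hc, hcy.trans ?_⟩
    gcongr
    nlinarith

lemma IsPhaseAdapted.add (h₁ : IsPhaseAdapted α γ W₁) (h₂ : IsPhaseAdapted α γ W₂) :
    IsPhaseAdapted α γ fun x y => W₁ x y + W₂ x y := by
  obtain ⟨C₁, hC₁, S₁, h₁⟩ := h₁
  obtain ⟨C₂, hC₂, S₂, h₂⟩ := h₂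
  refine ⟨2 * (C₁ + C₂), by positivity, S₁ ∪ S₂, fun x y => ?_⟩
  have hwiden {w v C z : ℝ} (hz : 0 ≤ z) (hvw : v ≤ w) (hC : C ≤ C₁ + C₂) (h : w ≤ C * z) :
      w + v ≤ 2 * (C₁ + C₂) * z := by
    linarith [mul_le_mul_of_nonneg_right hC hz]
  have hstrip {C : ℝ} (hC : C ≤ C₁ + C₂) : C / √(1 + |x|) ≤ 2 * (C₁ + C₂) / √(1 + |x|) := by
    gcongr
    linarith
  rcases le_total (W₂ x y) (W₁ x y) with hle | hle
  · rcases h₁ x y with h | ⟨h, c, hc, hcy⟩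
    · exact .inl (hwiden (abs_nonneg _) hle (by linarith) h)
    · exact .inr ⟨hwiden (Real.sqrt_nonneg _) hle (by linarith) h, c,
        Finset.mem_union_left _ hc, hcy.trans (hstrip (by linarith))⟩
  · simp only [add_comm (W₁ x y)]
    rcases h₂ x y with h | ⟨h, c, hc, hcy⟩
    · exact .inl (hwiden (abs_nonneg _) hle (by linarith) h)
    · exact .inr ⟨hwiden (Real.sqrt_nonneg _) hle (by linarith) h, c,
        Finset.mem_union_right _ hc, hcy.trans (hstrip (by linarith))⟩

lemma exists_mul_sq_add_sq_le_abs_quadraticForm {A B D : ℝ} (hdisc : 0 < 4 * A * D - B ^ 2) :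
    ∃ c, 0 < c ∧ ∀ x y : ℝ, c * (x ^ 2 + y ^ 2) ≤ |A * x ^ 2 + B * x * y + D * y ^ 2| := by
  have hA : A ≠ 0 := by
    rintro rfl
    nlinarith [sq_nonneg B]
  have hpos : 0 < 4 * (|A| + |D|) := by positivity
  refine ⟨(4 * A * D - B ^ 2) / (4 * (|A| + |D|)), by positivity, fun x y => ?_⟩
  rw [div_mul_eq_mul_div, div_le_iff₀ hpos]
  have hx : (4 * A * D - B ^ 2) * x ^ 2 ≤ 4 * (|D| * |A * x ^ 2 + B * x * y + D * y ^ 2|) := by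
    rw [← abs_mul]
    linarith [le_abs_self (D * (A * x ^ 2 + B * x * y + D * y ^ 2)),
      sq_nonneg (2 * D * y + B * x)]
  have hy : (4 * A * D - B ^ 2) * y ^ 2 ≤ 4 * (|A| * |A * x ^ 2 + B * x * y + D * y ^ 2|) := by
    rw [← abs_mul]
    linarith [le_abs_self (A * (A * x ^ 2 + B * x * y + D * y ^ 2)),
      sq_nonneg (2 * A * x + B * y)]
  linarith

lemma exists_abs_add_abs_le_of_ne {c₁ c₂ : ℝ} (hc : c₁ ≠ c₂) :
    ∃ N, 0 ≤ N ∧ ∀ x y : ℝ, |x| + |y| ≤ N * (|y - c₁ * x| + |y - c₂ * x|) := by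
  have hpos : 0 < |c₂ - c₁| := abs_pos.2 (sub_ne_zero.2 hc.symm)
  refine ⟨(1 + |c₁| + |c₂|) / |c₂ - c₁|, by positivity, fun x y => ?_⟩
  rw [div_mul_eq_mul_div, le_div_iff₀ hpos]
  have hx : |x| * |c₂ - c₁| ≤ |y - c₁ * x| + |y - c₂ * x| := by
    rw [← abs_mul, show x * (c₂ - c₁) = (y - c₁ * x) - (y - c₂ * x) by ring]
    exact abs_sub _ _
  have hy : |y| * |c₂ - c₁| ≤ |c₂| * |y - c₁ * x| + |c₁| * |y - c₂ * x| := by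
    rw [← abs_mul, show y * (c₂ - c₁) = c₂ * (y - c₁ * x) - c₁ * (y - c₂ * x) by ring,
      ← abs_mul, ← abs_mul]
    exact abs_sub _ _
  nlinarith [mul_nonneg (abs_nonneg c₁) (abs_nonneg (y - c₁ * x)),
    mul_nonneg (abs_nonneg c₂) (abs_nonneg (y - c₂ * x))]

/-- The derivative of the phase `αy³ - γ(y - x)³` vanishes to first order along a finite set `S` of
lines `y = cx`, with slope at least `min 1 |x| * (|x| + |y|)`. -/
def IsPhaseTransverse (α γ : ℝ) (S : Finset ℝ) : Prop :=
  ∃ K, 0 ≤ K ∧ ∀ x y, ∃ c ∈ S, min 1 |y - c * x| * (min 1 |x| * (|x| + |y|)) ≤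
    K * |α * y ^ 2 - γ * (y - x) ^ 2|

lemma min_one_mul_min_one_mul_le {u z T : ℝ} (hT : 0 ≤ T) (hu : 0 ≤ u) (hz : 0 ≤ z) :
    min 1 u * (min 1 z * T) ≤ u * T :=
  mul_le_mul (min_le_right _ _) (mul_le_of_le_one_left hT (min_le_left _ _)) (by positivity) hu

lemma isPhaseTransverse_of_mul_neg (h : α * γ < 0) : IsPhaseTransverse α γ {1 / 2} := by
  obtain ⟨c, hc, hform⟩ := exists_mul_sq_add_sq_le_abs_quadraticForm
    (A := α - γ) (B := 2 * γ) (D := -γ) (by linarith)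
  refine ⟨2 / c, by positivity, fun x y => ⟨_, Finset.mem_singleton_self _, ?_⟩⟩
  have hu : |y - 1 / 2 * x| ≤ |x| + |y| := by
    have h := abs_sub y (1 / 2 * x)
    rw [abs_mul, abs_of_pos (one_half_pos (α := ℝ))] at h
    linarith [abs_nonneg x]
  calc min 1 |y - 1 / 2 * x| * (min 1 |x| * (|x| + |y|))
      ≤ |y - 1 / 2 * x| * (|x| + |y|) :=
        min_one_mul_min_one_mul_le (by positivity) (abs_nonneg _) (abs_nonneg _)
    _ ≤ (|x| + |y|) * (|x| + |y|) := by gcongr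
    _ ≤ 2 * (y ^ 2 + x ^ 2) := by
        rw [← sq_abs x, ← sq_abs y]
        linarith [sq_nonneg (|x| - |y|)]
    _ = 2 / c * (c * (y ^ 2 + x ^ 2)) := by field_simp
    _ ≤ 2 / c * |(α - γ) * y ^ 2 + 2 * γ * y * x + -γ * x ^ 2| := by gcongr; exact hform y x
    _ = 2 / c * |α * y ^ 2 - γ * (y - x) ^ 2| := by
        congr 2
        ring

lemma isPhaseTransverse_self (hα : α ≠ 0) : IsPhaseTransverse α α {1 / 2} := by
  refine ⟨3 / (2 * |α|), by positivity, fun x y => ⟨_, Finset.mem_singleton_self _, ?_⟩⟩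
  have hphase : |α * y ^ 2 - α * (y - x) ^ 2| = |α| * (2 * |x| * |y - 1 / 2 * x|) := by
    rw [show α * y ^ 2 - α * (y - x) ^ 2 = α * (2 * x * (y - 1 / 2 * x)) by ring, abs_mul, abs_mul,
      abs_mul, abs_two]
  have hy : |y| ≤ |y - 1 / 2 * x| + |x| := by
    have h := abs_add_le (y - 1 / 2 * x) (1 / 2 * x)
    rw [sub_add_cancel, abs_mul, abs_of_pos (one_half_pos (α := ℝ))] at h
    linarith [abs_nonneg x]
  have hmin {u z : ℝ} (hu : 0 ≤ u) (hz : 0 ≤ z) :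
      min 1 u * (min 1 z * (2 * z + u)) ≤ 3 * (z * u) := by
    have hfar : min 1 u * (min 1 z * u) ≤ 1 * (z * u) := by gcongr <;> simp
    have hnear : min 1 u * (min 1 z * (2 * z)) ≤ u * (1 * (2 * z)) := by gcongr <;> simp
    linarith
  calc min 1 |y - 1 / 2 * x| * (min 1 |x| * (|x| + |y|))
      ≤ min 1 |y - 1 / 2 * x| * (min 1 |x| * (2 * |x| + |y - 1 / 2 * x|)) := by
        gcongr min 1 _ * (min 1 |x| * ?_)
        linarith
    _ ≤ 3 * (|x| * |y - 1 / 2 * x|) := hmin (abs_nonneg _) (abs_nonneg _)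
    _ = 3 / (2 * |α|) * |α * y ^ 2 - α * (y - x) ^ 2| := by
        rw [hphase]
        field_simp

lemma isPhaseTransverse_of_factorization {κ c₁ c₂ : ℝ} (hκ : κ ≠ 0) (hc : c₁ ≠ c₂)
    (hfac : ∀ x y, α * y ^ 2 - γ * (y - x) ^ 2 = κ * ((y - c₁ * x) * (y - c₂ * x))) :
    IsPhaseTransverse α γ {c₁, c₂} := by
  obtain ⟨N, hN, hsum⟩ := exists_abs_add_abs_le_of_ne hc
  refine ⟨2 * N / |κ|, by positivity, fun x y => ?_⟩
  have hnearest {u v : ℝ} (hu : 0 ≤ u) (huv : u ≤ v) (hT : |x| + |y| ≤ N * (u + v)) :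
      min 1 u * (min 1 |x| * (|x| + |y|)) ≤ 2 * N * (u * v) :=
    calc min 1 u * (min 1 |x| * (|x| + |y|)) ≤ u * (|x| + |y|) :=
          min_one_mul_min_one_mul_le (by positivity) hu (abs_nonneg _)
      _ ≤ u * (N * (v + v)) := by
          gcongr
          exact hT.trans (by gcongr)
      _ = 2 * N * (u * v) := by ring
  have habs : 2 * N / |κ| * |α * y ^ 2 - γ * (y - x) ^ 2| =
      2 * N * (|y - c₁ * x| * |y - c₂ * x|) := by
    rw [hfac, abs_mul, abs_mul]
    field_simp
  rw [habs]
  rcases le_total |y - c₁ * x| |y - c₂ * x| with h | h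
  · exact ⟨c₁, by simp, hnearest (abs_nonneg _) h (hsum x y)⟩
  · refine ⟨c₂, by simp, ?_⟩
    rw [mul_comm |y - c₁ * x|]
    exact hnearest (abs_nonneg _) h (by rw [add_comm |y - c₂ * x|]; exact hsum x y)

lemma exists_isPhaseTransverse_of_mul_pos (h : 0 < α * γ) (hne : γ ≠ α) :
    ∃ S, 0 ∉ S ∧ IsPhaseTransverse α γ S := by
  have hα : α ≠ 0 := left_ne_zero_of_mul h.ne'
  have hq : 0 < γ / α := by
    have : γ / α = α * γ / α ^ 2 := by field_simp
    rw [this]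
    positivity
  obtain ⟨q, hq₀, rfl⟩ : ∃ q, 0 < q ∧ γ = q ^ 2 * α :=
    ⟨√(γ / α), Real.sqrt_pos.2 hq, by rw [Real.sq_sqrt hq.le]; field_simp⟩
  have hq₁ : q - 1 ≠ 0 := fun hq₁ => hne (by rw [sub_eq_zero.1 hq₁]; ring)
  have hq₂ : q + 1 ≠ 0 := by positivity
  refine ⟨{q / (q - 1), q / (q + 1)}, ?_, isPhaseTransverse_of_factorization
    (κ := -α * ((q - 1) * (q + 1))) (mul_ne_zero (neg_ne_zero.2 hα) (mul_ne_zero hq₁ hq₂)) ?_ ?_⟩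
  · simp only [Finset.mem_insert, Finset.mem_singleton, not_or]
    exact ⟨(div_ne_zero hq₀.ne' hq₁).symm, (div_ne_zero hq₀.ne' hq₂).symm⟩
  · rw [Ne, div_eq_div_iff hq₁ hq₂, mul_right_inj' hq₀.ne']
    intro h
    linarith
  · intro x y
    field_simp
    ring

lemma exists_isPhaseTransverse (hα : α ≠ 0) (hγ : γ ≠ 0) :
    ∃ S, 0 ∉ S ∧ IsPhaseTransverse α γ S := by
  rcases (mul_ne_zero hα hγ).lt_or_gt with h | h
  · exact ⟨_, by norm_num, isPhaseTransverse_of_mul_neg h⟩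
  · rcases eq_or_ne γ α with rfl | hne
    · exact ⟨_, by norm_num, isPhaseTransverse_self hα⟩
    · exact exists_isPhaseTransverse_of_mul_pos h hne

lemma abs_add_abs_le_of_abs_sub_mul_le_one {c M x y : ℝ} (hM : |c| ≤ M) (hy : |y - c * x| ≤ 1) :
    |x| + |y| ≤ (1 + M) * (1 + |x|) := by
  have h := abs_add_le (y - c * x) (c * x)
  rw [sub_add_cancel, abs_mul] at h
  nlinarith [mul_le_mul_of_nonneg_right hM (abs_nonneg x), (abs_nonneg c).trans hM]

lemma one_add_abs_le_of_abs_sub_mul_le_one {c M x y : ℝ} (hc : c ≠ 0) (hM : |c|⁻¹ ≤ M)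
    (hy : |y - c * x| ≤ 1) : 1 + |x| ≤ (1 + M) * (1 + min |x| |y|) := by
  have hM₀ : 0 ≤ M := (inv_nonneg.2 (abs_nonneg c)).trans hM
  rcases le_total |x| |y| with h | h
  · rw [min_eq_left h]
    nlinarith [abs_nonneg x]
  · have hcx := abs_sub y (y - c * x)
    rw [sub_sub_cancel, abs_mul] at hcx
    have hx : |x| ≤ |c|⁻¹ * (|y| + 1) := by
      rw [inv_mul_eq_div, le_div_iff₀ (abs_pos.2 hc)]
      linarith
    rw [min_eq_right h]
    nlinarith [mul_le_mul_of_nonneg_right hM (add_nonneg (abs_nonneg y) zero_le_one), abs_nonneg y]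

lemma sqrt_one_add_abs_le_of_abs_sub_mul_le_one {c M x y : ℝ} (hc : c ≠ 0) (hM : |c|⁻¹ ≤ M)
    (hy : |y - c * x| ≤ 1) : √(1 + |x|) ≤ (1 + M) * √(1 + min |x| |y|) := by
  have hM₀ : 0 ≤ M := (inv_nonneg.2 (abs_nonneg c)).trans hM
  calc √(1 + |x|) ≤ √((1 + M) * (1 + min |x| |y|)) :=
        Real.sqrt_le_sqrt (one_add_abs_le_of_abs_sub_mul_le_one hc hM hy)
    _ = √(1 + M) * √(1 + min |x| |y|) := Real.sqrt_mul (by positivity) _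
    _ ≤ (1 + M) * √(1 + min |x| |y|) := by
        gcongr
        exact Real.sqrt_le_iff.2 ⟨by positivity, by nlinarith⟩

lemma le_mul_or_le_mul_and_le_one_div {w r R Φ u A B D : ℝ} (hw : 0 ≤ w) (hr : 0 < r) (hu : 0 ≤ u)
    (hB : 0 ≤ B) (hfar : w ≤ B * R) (hnear : u ≤ 1 → w * r ≤ B * R)
    (hR : u ≤ 1 → R ≤ D * r ^ 2) (hslope : min 1 u * R ≤ A * Φ) :
    w ≤ B * A * Φ ∨ (w ≤ B * D * r ∧ u ≤ 1 / r) := by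
  rcases le_total 1 u with h | h
  · rw [min_eq_left h, one_mul] at hslope
    exact .inl (by nlinarith)
  · rw [min_eq_right h] at hslope
    rcases le_total (u * r) 1 with hur | hur
    · refine .inr ⟨le_of_mul_le_mul_right ?_ hr, (le_div_iff₀ hr).2 hur⟩
      linarith [hnear h, mul_le_mul_of_nonneg_left (hR h) hB]
    · left
      calc w ≤ w * (u * r) := le_mul_of_one_le_right hw hur
        _ = u * (w * r) := by ring
        _ ≤ u * (B * R) := mul_le_mul_of_nonneg_left (hnear h) hu
        _ = B * (u * R) := by ring
        _ ≤ B * (A * Φ) := mul_le_mul_of_nonneg_left hslope hB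
        _ = B * A * Φ := by ring

lemma isPhaseAdapted_of_mul_sqrt_le (hα : α ≠ 0) (hγ : γ ≠ 0) {K : ℝ} (hK : 0 ≤ K)
    (hW₀ : ∀ x y, 0 ≤ W x y)
    (hW : ∀ x y, W x y * √(1 + min |x| |y|) ≤ K * (min 1 |x| * (|x| + |y|))) :
    IsPhaseAdapted α γ W := by
  obtain ⟨S, hS, A, hA, hslope⟩ := exists_isPhaseTransverse hα hγ
  obtain ⟨M, hM⟩ := (insert 0 (S.image fun c => |c| + |c|⁻¹)).exists_le
  have hM₀ : 0 ≤ M := hM 0 (Finset.mem_insert_self _ _)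
  refine ⟨K * (1 + M) * A + K * (1 + M) * (1 + M) + 1, by positivity, S, fun x y => ?_⟩
  obtain ⟨c, hc, hslope⟩ := hslope x y
  have hc₀ : c ≠ 0 := fun h => hS (h ▸ hc)
  have hcM := hM _ (Finset.mem_insert_of_mem (Finset.mem_image_of_mem _ hc))
  have hr : 0 < √(1 + |x|) := by positivity
  have hfar : W x y ≤ K * (1 + M) * (min 1 |x| * (|x| + |y|)) := by
    have hsqrt : 1 ≤ √(1 + min |x| |y|) :=
      Real.one_le_sqrt.2 (by linarith [le_min (abs_nonneg x) (abs_nonneg y)])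
    refine (le_mul_of_one_le_right (hW₀ x y) hsqrt).trans ((hW x y).trans ?_)
    gcongr
    exact le_mul_of_one_le_right hK (by linarith)
  have hnear (hu : |y - c * x| ≤ 1) :
      W x y * √(1 + |x|) ≤ K * (1 + M) * (min 1 |x| * (|x| + |y|)) := by
    have hsqrt := sqrt_one_add_abs_le_of_abs_sub_mul_le_one hc₀
      (by linarith [abs_nonneg c] : |c|⁻¹ ≤ M) hu
    nlinarith [hW x y, mul_le_mul_of_nonneg_left hsqrt (hW₀ x y)]
  have hbound (hu : |y - c * x| ≤ 1) :
      min 1 |x| * (|x| + |y|) ≤ (1 + M) * √(1 + |x|) ^ 2 := by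
    rw [Real.sq_sqrt (by positivity)]
    exact (mul_le_of_le_one_left (by positivity) (min_le_left _ _)).trans <|
      abs_add_abs_le_of_abs_sub_mul_le_one (by linarith [inv_nonneg.2 (abs_nonneg c)]) hu
  rcases le_mul_or_le_mul_and_le_one_div (hW₀ x y) hr (abs_nonneg _) (by positivity) hfar hnear
    hbound hslope with h | ⟨h, hstrip⟩
  · exact .inl (h.trans (by gcongr; nlinarith [mul_nonneg hK hM₀]))
  · refine .inr ⟨h.trans (by gcongr; nlinarith [mul_nonneg hK hM₀]), c, hc, hstrip.trans ?_⟩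
    gcongr
    nlinarith [mul_nonneg hK hM₀]

end PhaseTransversality

section FrequencyWeights

/-- The squared frequency weight, after the resonance gain, of the interactions
`ξ = ξ₁ + (ξ - ξ₁)` in which both input frequencies are at least `1` in size. -/
noncomputable def highWeight (ξ ξ₁ : ℝ) : ℝ :=
  if 1 ≤ |ξ₁| ∧ 1 ≤ |ξ - ξ₁| then min 1 |ξ| * (|ξ₁| + |ξ - ξ₁|) / √(1 + |ξ|) else 0

/-- The squared frequency weight `ξ²` of the derivative, restricted to the interactions
`ξ = ξ₁ + (ξ - ξ₁)` in which some input frequency is smaller than `1` in size. -/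
noncomputable def lowWeight (ξ ξ₁ : ℝ) : ℝ :=
  if 1 ≤ |ξ₁| ∧ 1 ≤ |ξ - ξ₁| then 0 else ξ ^ 2

lemma highWeight_nonneg (ξ ξ₁ : ℝ) : 0 ≤ highWeight ξ ξ₁ := by
  unfold highWeight
  split_ifs <;> positivity

lemma lowWeight_nonneg (ξ ξ₁ : ℝ) : 0 ≤ lowWeight ξ ξ₁ := by
  unfold lowWeight
  split_ifs <;> positivity

lemma highWeight_sub_right (ξ ξ₁ : ℝ) : highWeight ξ (ξ - ξ₁) = highWeight ξ ξ₁ := by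
  simp only [highWeight, sub_sub_cancel, and_comm, add_comm]

lemma measurableSet_highFrequencies :
    MeasurableSet {p : ℝ × ℝ | 1 ≤ |p.2| ∧ 1 ≤ |p.1 - p.2|} := by
  have hfst : Measurable fun p : ℝ × ℝ => |p.2| := by fun_prop
  have hsnd : Measurable fun p : ℝ × ℝ => |p.1 - p.2| := by fun_prop
  exact (measurableSet_le measurable_const hfst).inter (measurableSet_le measurable_const hsnd)

lemma measurable_highWeight : Measurable (Function.uncurry highWeight) :=
  Measurable.ite measurableSet_highFrequencies (by fun_prop) measurable_const

lemma measurable_lowWeight : Measurable (Function.uncurry lowWeight) :=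
  Measurable.ite measurableSet_highFrequencies measurable_const (by fun_prop)

lemma highWeight_mul_sqrt_le (ξ ξ₁ : ℝ) :
    highWeight ξ ξ₁ * √(1 + |ξ|) ≤ 2 * (min 1 |ξ| * (|ξ| + |ξ₁|)) := by
  rw [highWeight]
  split_ifs
  · rw [div_mul_cancel₀ _ (by positivity), mul_left_comm]
    gcongr
    linarith [abs_sub ξ ξ₁, abs_nonneg ξ]
  · rw [zero_mul]
    positivity

variable {α γ : ℝ}

lemma isPhaseAdapted_highWeight (hα : α ≠ 0) (hγ : γ ≠ 0) : IsPhaseAdapted α γ highWeight :=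
  isPhaseAdapted_of_mul_sqrt_le hα hγ zero_le_two highWeight_nonneg fun x y =>
    (mul_le_mul_of_nonneg_left (Real.sqrt_le_sqrt (by gcongr; exact min_le_left _ _))
      (highWeight_nonneg x y)).trans (highWeight_mul_sqrt_le x y)

lemma isPhaseAdapted_highWeight_flip (hα : α ≠ 0) (hγ : γ ≠ 0) :
    IsPhaseAdapted α γ fun x y => highWeight y x := by
  refine isPhaseAdapted_of_mul_sqrt_le hα hγ zero_le_two (fun x y => highWeight_nonneg y x)
    fun x y => ?_
  by_cases hx : 1 ≤ |x|
  · calc highWeight y x * √(1 + min |x| |y|) ≤ highWeight y x * √(1 + |y|) :=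
          mul_le_mul_of_nonneg_left (Real.sqrt_le_sqrt (by gcongr; exact min_le_right _ _))
            (highWeight_nonneg y x)
      _ ≤ 2 * (min 1 |y| * (|y| + |x|)) := highWeight_mul_sqrt_le y x
      _ ≤ 2 * (min 1 |x| * (|x| + |y|)) := by
          rw [min_eq_left hx, add_comm |y|]
          gcongr
          exact min_le_left _ _
  · rw [highWeight, if_neg fun h => hx h.1, zero_mul]
    positivity

lemma sq_add_le_of_abs_le_one {u : ℝ} (hγ : γ ≠ 0) (hu : |u| ≤ 1) (v : ℝ) :
    (u + v) ^ 2 ≤ 2 * |γ|⁻¹ * (|α * u ^ 2 - γ * v ^ 2| + |α|) + 2 := by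
  have hu_sq : u ^ 2 ≤ 1 := (sq_le_one_iff_abs_le_one u).2 hu
  have hv : |γ| * v ^ 2 ≤ |α * u ^ 2 - γ * v ^ 2| + |α| := by
    have h := abs_sub (α * u ^ 2) (α * u ^ 2 - γ * v ^ 2)
    rw [sub_sub_cancel, abs_mul, abs_mul, abs_of_nonneg (sq_nonneg u),
      abs_of_nonneg (sq_nonneg v)] at h
    nlinarith [mul_le_mul_of_nonneg_left hu_sq (abs_nonneg α)]
  have hv' : v ^ 2 ≤ |γ|⁻¹ * (|α * u ^ 2 - γ * v ^ 2| + |α|) := by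
    rwa [inv_mul_eq_div, le_div_iff₀' (abs_pos.2 hγ)]
  linarith [sq_nonneg (u - v)]

lemma exists_sq_le_mul_abs_phase_add_one (hα : α ≠ 0) (hγ : γ ≠ 0) :
    ∃ K, 0 ≤ K ∧ ∀ x y : ℝ, |y| ≤ 1 ∨ |x - y| ≤ 1 →
      x ^ 2 ≤ K * (|α * y ^ 2 - γ * (y - x) ^ 2| + 1) := by
  refine ⟨2 * |α|⁻¹ * (1 + |γ|) + 2 * |γ|⁻¹ * (1 + |α|) + 2, by positivity, fun x y hxy => ?_⟩
  have hα' : 0 ≤ |α|⁻¹ := by positivity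
  have hγ' : 0 ≤ |γ|⁻¹ := by positivity
  have hΦ : 0 ≤ |α * y ^ 2 - γ * (y - x) ^ 2| := abs_nonneg _
  have habsorb {k a Φ : ℝ} (hk : 0 ≤ k) (ha : 0 ≤ a) (hΦ : 0 ≤ Φ) :
      2 * k * (Φ + a) + 2 ≤ (2 * k * (1 + a) + 2) * (Φ + 1) := by
    nlinarith [mul_nonneg (mul_nonneg hk ha) hΦ]
  rcases hxy with hy | hy
  · have h := sq_add_le_of_abs_le_one (α := α) hγ hy (x - y)
    rw [add_sub_cancel, ← neg_sub y x, neg_sq] at h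
    refine (h.trans (habsorb hγ' (abs_nonneg α) hΦ)).trans ?_
    gcongr
    exact le_add_of_nonneg_left (by positivity)
  · have h := sq_add_le_of_abs_le_one (α := γ) hα hy y
    rw [sub_add_cancel, ← neg_sub y x, neg_sq, abs_sub_comm] at h
    refine (h.trans (habsorb hα' (abs_nonneg γ) hΦ)).trans ?_
    gcongr
    exact le_add_of_nonneg_right (by positivity)

lemma isPhaseAdapted_lowWeight (hα : α ≠ 0) (hγ : γ ≠ 0) : IsPhaseAdapted α γ lowWeight := by
  obtain ⟨K, hK, hsq⟩ := exists_sq_le_mul_abs_phase_add_one hα hγ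
  refine ⟨4 * K + 2, by positivity, {0}, fun x y => ?_⟩
  rw [lowWeight]
  split_ifs with hhigh
  · exact .inl (by positivity)
  have hlow : |y| ≤ 1 ∨ |x - y| ≤ 1 := by
    rw [not_and_or, not_le, not_le] at hhigh
    exact hhigh.imp le_of_lt le_of_lt
  have hx := hsq x y hlow
  rcases le_total 1 |α * y ^ 2 - γ * (y - x) ^ 2| with hΦ | hΦ
  · exact .inl (by nlinarith)
  have hx' : x ^ 2 ≤ 2 * K := by nlinarith
  have hr : 1 ≤ √(1 + |x|) := Real.one_le_sqrt.2 (by linarith [abs_nonneg x])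
  have hy : |y| ≤ 1 + |x| := by
    rcases hlow with h | h
    · linarith [abs_nonneg x]
    · linarith [abs_sub_abs_le_abs_sub y x, abs_sub_comm x y]
  refine .inr ⟨by nlinarith, 0, Finset.mem_singleton_self _, ?_⟩
  rw [zero_mul, sub_zero, le_div_iff₀ (by linarith)]
  calc |y| * √(1 + |x|) ≤ (1 + |x|) * (1 + |x|) := by
        gcongr
        exact Real.sqrt_le_iff.2 ⟨by positivity, by nlinarith [abs_nonneg x]⟩
    _ ≤ 4 * K + 2 := by nlinarith [sq_abs x, sq_nonneg (|x| - 1)]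

end FrequencyWeights

section Resonance

lemma exists_mul_abs_le_abs_resonance {a₁ a₂ : ℝ} (ha₁ : a₁ ≠ 0) (ha₂ : a₂ ≠ 0)
    (hratio : a₂ / a₁ < 0 ∨ a₂ / a₁ = 1 ∨ 4 < a₂ / a₁) :
    ∃ c, 0 < c ∧ ∀ ξ ξ₁ : ℝ, c * (|ξ| * |ξ₁| * |ξ - ξ₁|) ≤
      |a₂ * ξ ^ 3 - a₁ * ξ₁ ^ 3 - a₂ * (ξ - ξ₁) ^ 3| := by
  by_cases heq : a₂ / a₁ = 1
  · obtain rfl : a₂ = a₁ := (div_eq_one_iff_eq ha₁).1 heq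
    refine ⟨3 * |a₂|, by positivity, fun ξ ξ₁ => le_of_eq ?_⟩
    have hfac : a₂ * ξ ^ 3 - a₂ * ξ₁ ^ 3 - a₂ * (ξ - ξ₁) ^ 3 =
        3 * a₂ * (ξ * ξ₁ * (ξ - ξ₁)) := by ring
    rw [hfac, abs_mul, abs_mul, abs_mul, abs_mul, abs_of_pos (zero_lt_three' ℝ)]
  have hdisc : 0 < 4 * (3 * a₂) * (a₂ - a₁) - (-3 * a₂) ^ 2 := by
    have hfac : 4 * (3 * a₂) * (a₂ - a₁) - (-3 * a₂) ^ 2 =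
        3 * a₁ ^ 2 * (a₂ / a₁ * (a₂ / a₁ - 4)) := by
      field_simp
      ring
    have hr : 0 < a₂ / a₁ * (a₂ / a₁ - 4) := by
      rcases hratio with h | h | h
      · exact mul_pos_of_neg_of_neg h (by linarith)
      · exact absurd h heq
      · exact mul_pos (by linarith) (by linarith)
    rw [hfac]
    positivity
  obtain ⟨c, hc, hform⟩ := exists_mul_sq_add_sq_le_abs_quadraticForm hdisc
  refine ⟨c / 2, by positivity, fun ξ ξ₁ => ?_⟩
  have hfac : a₂ * ξ ^ 3 - a₁ * ξ₁ ^ 3 - a₂ * (ξ - ξ₁) ^ 3 =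
      ξ₁ * (3 * a₂ * ξ ^ 2 + -3 * a₂ * ξ * ξ₁ + (a₂ - a₁) * ξ₁ ^ 2) := by ring
  have hprod : |ξ| * |ξ - ξ₁| ≤ 2 * (ξ ^ 2 + ξ₁ ^ 2) := by
    rw [← sq_abs ξ, ← sq_abs ξ₁]
    nlinarith [abs_nonneg ξ, abs_sub ξ ξ₁, sq_nonneg (|ξ| - |ξ₁|), sq_nonneg |ξ₁|]
  rw [hfac, abs_mul]
  calc c / 2 * (|ξ| * |ξ₁| * |ξ - ξ₁|) = |ξ₁| * (c / 2 * (|ξ| * |ξ - ξ₁|)) := by ring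
    _ ≤ |ξ₁| * (c / 2 * (2 * (ξ ^ 2 + ξ₁ ^ 2))) := by gcongr
    _ = |ξ₁| * (c * (ξ ^ 2 + ξ₁ ^ 2)) := by ring
    _ ≤ _ := mul_le_mul_of_nonneg_left (hform ξ ξ₁) (abs_nonneg ξ₁)

lemma abs_resonance_le (a₁ a₂ : ℝ) (p q : ℝ × ℝ) :
    |a₂ * p.2 ^ 3 - a₁ * q.2 ^ 3 - a₂ * (p.2 - q.2) ^ 3| ≤
      modulation a₂ p + modulation a₁ q + modulation a₂ (p - q) := by
  have hsum : a₂ * p.2 ^ 3 - a₁ * q.2 ^ 3 - a₂ * (p.2 - q.2) ^ 3 = -(p.1 - a₂ * p.2 ^ 3) +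
      (q.1 - a₁ * q.2 ^ 3) + ((p - q).1 - a₂ * (p - q).2 ^ 3) := by
    rw [Prod.fst_sub, Prod.snd_sub]
    ring
  rw [hsum, modulation, modulation, modulation]
  refine (abs_add_three _ _ _).trans ?_
  rw [abs_neg]
  linarith

lemma rpow_neg_mul_rpow_neg_le {k L M θ β : ℝ} (hk : 0 < k) (hkM : k ≤ M) (hL : 0 < L)
    (hLM : L ≤ M) (hθ : 0 ≤ θ) (hθβ : θ ≤ β) :
    L ^ (-θ) * M ^ (-β) ≤ k ^ (-θ) * L ^ (-β) := by
  have hM : 0 < M := hk.trans_le hkM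
  calc L ^ (-θ) * M ^ (-β) = L ^ (-β) * (L ^ (β - θ) * M ^ (-β)) := by
        rw [← mul_assoc, ← Real.rpow_add hL]
        ring_nf
    _ ≤ L ^ (-β) * (M ^ (β - θ) * M ^ (-β)) := by gcongr
    _ = L ^ (-β) * M ^ (-θ) := by
        rw [← Real.rpow_add hM]
        ring_nf
    _ ≤ L ^ (-β) * k ^ (-θ) := mul_le_mul_of_nonneg_left
        (Real.rpow_le_rpow_of_nonpos hk hkM (by linarith)) (by positivity)
    _ = k ^ (-θ) * L ^ (-β) := mul_comm _ _

/-- When the large modulation is `L₁` or `L₂`, the gain `k^{-θ}` is taken from it and its remaining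
decay is passed on to `L`, whose decay `θ` alone is not integrable. -/
lemma rpow_neg_mul_rpow_neg_mul_rpow_neg_le {k L L₁ L₂ θ β : ℝ} (hk : 0 < k) (hL : 0 < L)
    (hL₁ : 0 < L₁) (hL₂ : 0 < L₂) (hsum : 3 * k ≤ L + L₁ + L₂) (hθ : 0 ≤ θ) (hθβ : θ ≤ β) :
    L ^ (-θ) * (L₁ ^ (-β) * L₂ ^ (-β)) ≤
      k ^ (-θ) * (L₁ ^ (-β) * L₂ ^ (-β) + L ^ (-β) * L₂ ^ (-β) + L ^ (-β) * L₁ ^ (-β)) := by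
  have hpos₁ : 0 ≤ k ^ (-θ) * (L₁ ^ (-β) * L₂ ^ (-β)) := by positivity
  have hpos₂ : 0 ≤ k ^ (-θ) * (L ^ (-β) * L₂ ^ (-β)) := by positivity
  have hpos₃ : 0 ≤ k ^ (-θ) * (L ^ (-β) * L₁ ^ (-β)) := by positivity
  rcases le_or_gt k L with hkL | hkL
  · have h := mul_le_mul_of_nonneg_right
      (Real.rpow_le_rpow_of_nonpos hk hkL (by linarith : -θ ≤ 0))
      (by positivity : 0 ≤ L₁ ^ (-β) * L₂ ^ (-β))
    linarith
  rcases le_or_gt k L₁ with hkL₁ | hkL₁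
  · have h := mul_le_mul_of_nonneg_right
      (rpow_neg_mul_rpow_neg_le hk hkL₁ hL (hkL.le.trans hkL₁) hθ hθβ)
      (Real.rpow_nonneg hL₂.le (-β))
    linarith
  · have hkL₂ : k ≤ L₂ := by linarith
    have h := mul_le_mul_of_nonneg_right
      (rpow_neg_mul_rpow_neg_le hk hkL₂ hL (hkL.le.trans hkL₂) hθ hθβ)
      (Real.rpow_nonneg hL₁.le (-β))
    linarith

end Resonance

section FrequencyEstimates

/-- The ratio `⟨ξ₁⟩⟨ξ - ξ₁⟩ / ⟨ξ⟩` of Japanese brackets. -/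
noncomputable def frequencyRatio (ξ ξ₁ : ℝ) : ℝ := (1 + |ξ₁|) * (1 + |ξ - ξ₁|) / (1 + |ξ|)

lemma one_le_frequencyRatio (ξ ξ₁ : ℝ) : 1 ≤ frequencyRatio ξ ξ₁ := by
  rw [frequencyRatio, one_le_div (by positivity)]
  nlinarith [abs_sub_abs_le_abs_sub ξ ξ₁, abs_nonneg ξ₁, abs_nonneg (ξ - ξ₁)]

lemma frequencyRatio_le_four {ξ ξ₁ : ℝ} (hlow : ¬(1 ≤ |ξ₁| ∧ 1 ≤ |ξ - ξ₁|)) :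
    frequencyRatio ξ ξ₁ ≤ 4 := by
  have h₁ : |ξ₁| ≤ |ξ| + |ξ - ξ₁| := by
    linarith [abs_sub_abs_le_abs_sub ξ₁ ξ, abs_sub_comm ξ ξ₁]
  rw [frequencyRatio, div_le_iff₀ (by positivity)]
  rw [not_and_or, not_le, not_le] at hlow
  rcases hlow with h | h <;> nlinarith [abs_sub ξ ξ₁, abs_nonneg ξ, abs_nonneg ξ₁,
    abs_nonneg (ξ - ξ₁)]

lemma rpow_neg_le_two_mul_one_add_rpow_neg {θ y : ℝ} (hθ₀ : 0 ≤ θ) (hθ₁ : θ ≤ 1) (hy : 1 ≤ y) :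
    y ^ (-θ) ≤ 2 * (1 + y) ^ (-θ) := by
  have hy₀ : 0 < y := by linarith
  have htwo : (2 : ℝ) ^ θ ≤ 2 := by
    simpa using Real.rpow_le_rpow_of_exponent_le one_le_two hθ₁
  calc y ^ (-θ) = 2 ^ θ * (2 * y) ^ (-θ) := by
        rw [Real.mul_rpow zero_le_two hy₀.le, ← mul_assoc, ← Real.rpow_add zero_lt_two,
          add_neg_cancel, Real.rpow_zero, one_mul]
    _ ≤ 2 * (1 + y) ^ (-θ) := by
        refine mul_le_mul htwo ?_ (by positivity) zero_le_two
        exact Real.rpow_le_rpow_of_nonpos (by linarith) (by linarith) (by linarith)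

lemma rpow_one_add_le_min_one_mul {δ x : ℝ} (hδ : 0 ≤ δ) (hx : 0 ≤ x) :
    x ^ (1 + δ) ≤ min 1 x * (1 + x) ^ (1 + δ) := by
  rcases le_total 1 x with h | h
  · rw [min_eq_left h, one_mul]
    gcongr
    linarith
  · rw [min_eq_right h, Real.rpow_add_of_nonneg hx zero_le_one hδ, Real.rpow_one]
    gcongr
    exact (Real.rpow_le_one hx h hδ).trans (Real.one_le_rpow (by linarith) (by linarith))

lemma bracket_product_le {δ P P₁ P₂ : ℝ} (hδ₀ : 0 ≤ δ) (hδ : δ ≤ 1 / 4) (hP : 0 < P)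
    (hP₁ : 0 < P₁) (hP₂ : 0 < P₂) (hsum : P ≤ P₁ + P₂) :
    (P₁ * P₂ / P) ^ (3 / 2 - 3 * δ) * P ^ (1 + δ) * (P₁ * P₂) ^ (-(1 - δ)) ≤
      (P₁ + P₂) / √P := by
  have hY : 0 < P₁ + P₂ := by positivity
  have hN : 0 < P₁ * P₂ := by positivity
  have hprod : P₁ * P₂ ≤ (P₁ + P₂) ^ (2 : ℝ) := by
    rw [Real.rpow_two]
    nlinarith
  calc (P₁ * P₂ / P) ^ (3 / 2 - 3 * δ) * P ^ (1 + δ) * (P₁ * P₂) ^ (-(1 - δ))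
      = ((P₁ * P₂) ^ (3 / 2 - 3 * δ) * (P₁ * P₂) ^ (-(1 - δ))) *
          (P ^ (-(3 / 2 - 3 * δ)) * P ^ (1 + δ)) := by
        rw [Real.div_rpow hN.le hP.le, Real.rpow_neg hP.le, div_eq_mul_inv]
        ring
    _ = (P₁ * P₂) ^ (1 / 2 - 2 * δ) * (P ^ (4 * δ) / √P) := by
        rw [Real.sqrt_eq_rpow, ← Real.rpow_add hN, ← Real.rpow_add hP, ← Real.rpow_sub hP]
        ring_nf
    _ ≤ ((P₁ + P₂) ^ (2 : ℝ)) ^ (1 / 2 - 2 * δ) * ((P₁ + P₂) ^ (4 * δ) / √P) := by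
        gcongr
        linarith
    _ = (P₁ + P₂) / √P := by
        have hexp : 2 * (1 / 2 - 2 * δ) + 4 * δ = 1 := by ring
        rw [← Real.rpow_mul hY.le, ← mul_div_assoc, ← Real.rpow_add hY, hexp, Real.rpow_one]

variable {δ ξ ξ₁ : ℝ}

lemma sq_mul_frequencyRatio_rpow_mul_le_highWeight (hδ₀ : 0 ≤ δ) (hδ : δ ≤ 1 / 4)
    (hξ₁ : 1 ≤ |ξ₁|) (hξ₂ : 1 ≤ |ξ - ξ₁|) :
    |ξ| ^ 2 * frequencyRatio ξ ξ₁ ^ (3 / 2 - 3 * δ) * (|ξ| * |ξ₁| * |ξ - ξ₁|) ^ (-(1 - δ)) ≤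
      8 * highWeight ξ ξ₁ := by
  rcases eq_or_ne ξ 0 with rfl | hξ
  · simpa using highWeight_nonneg 0 ξ₁
  have hξ' : 0 < |ξ| := abs_pos.2 hξ
  have hdecay {y : ℝ} (hy : 1 ≤ y) : y ^ (-(1 - δ)) ≤ 2 * (1 + y) ^ (-(1 - δ)) :=
    rpow_neg_le_two_mul_one_add_rpow_neg (by linarith) (by linarith) hy
  have hlow : |ξ| ^ 2 * |ξ| ^ (-(1 - δ)) ≤ min 1 |ξ| * (1 + |ξ|) ^ (1 + δ) := by
    convert rpow_one_add_le_min_one_mul hδ₀ hξ'.le using 1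
    rw [← Real.rpow_two, ← Real.rpow_add hξ']
    ring_nf
  have hsum : 1 + |ξ| ≤ (1 + |ξ₁|) + (1 + |ξ - ξ₁|) := by
    linarith [abs_sub_abs_le_abs_sub ξ ξ₁]
  have hQ : 0 ≤ frequencyRatio ξ ξ₁ := zero_le_one.trans (one_le_frequencyRatio ξ ξ₁)
  calc |ξ| ^ 2 * frequencyRatio ξ ξ₁ ^ (3 / 2 - 3 * δ) * (|ξ| * |ξ₁| * |ξ - ξ₁|) ^ (-(1 - δ))
      = (|ξ| ^ 2 * |ξ| ^ (-(1 - δ))) * frequencyRatio ξ ξ₁ ^ (3 / 2 - 3 * δ) *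
          (|ξ₁| ^ (-(1 - δ)) * |ξ - ξ₁| ^ (-(1 - δ))) := by
        rw [Real.mul_rpow (by positivity) (by positivity), Real.mul_rpow hξ'.le (by positivity)]
        ring
    _ ≤ (min 1 |ξ| * (1 + |ξ|) ^ (1 + δ)) * frequencyRatio ξ ξ₁ ^ (3 / 2 - 3 * δ) *
          ((2 * (1 + |ξ₁|) ^ (-(1 - δ))) * (2 * (1 + |ξ - ξ₁|) ^ (-(1 - δ)))) :=
        mul_le_mul (mul_le_mul_of_nonneg_right hlow (by positivity))
          (mul_le_mul (hdecay hξ₁) (hdecay hξ₂) (by positivity) (by positivity))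
          (by positivity) (by positivity)
    _ = 4 * min 1 |ξ| * (frequencyRatio ξ ξ₁ ^ (3 / 2 - 3 * δ) * (1 + |ξ|) ^ (1 + δ) *
          ((1 + |ξ₁|) * (1 + |ξ - ξ₁|)) ^ (-(1 - δ))) := by
        rw [Real.mul_rpow (by positivity) (by positivity)]
        ring
    _ ≤ 4 * min 1 |ξ| * (((1 + |ξ₁|) + (1 + |ξ - ξ₁|)) / √(1 + |ξ|)) :=
        mul_le_mul_of_nonneg_left (bracket_product_le hδ₀ hδ (by positivity) (by positivity)
          (by positivity) hsum) (by positivity)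
    _ ≤ 4 * min 1 |ξ| * (2 * (|ξ₁| + |ξ - ξ₁|) / √(1 + |ξ|)) := by
        gcongr
        linarith
    _ = 8 * highWeight ξ ξ₁ := by
        rw [highWeight, if_pos ⟨hξ₁, hξ₂⟩]
        ring

lemma sq_mul_frequencyRatio_rpow_le_lowWeight (hδ₀ : 0 ≤ δ)
    (hlow : ¬(1 ≤ |ξ₁| ∧ 1 ≤ |ξ - ξ₁|)) :
    |ξ| ^ 2 * frequencyRatio ξ ξ₁ ^ (3 / 2 - 3 * δ) ≤ 16 * lowWeight ξ ξ₁ := by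
  have hratio : frequencyRatio ξ ξ₁ ^ (3 / 2 - 3 * δ) ≤ 16 :=
    calc frequencyRatio ξ ξ₁ ^ (3 / 2 - 3 * δ) ≤ frequencyRatio ξ ξ₁ ^ (2 : ℝ) :=
          Real.rpow_le_rpow_of_exponent_le (one_le_frequencyRatio ξ ξ₁) (by linarith)
      _ = frequencyRatio ξ ξ₁ ^ 2 := Real.rpow_two _
      _ ≤ 4 ^ 2 := by
          gcongr
          · exact zero_le_one.trans (one_le_frequencyRatio ξ ξ₁)
          · exact frequencyRatio_le_four hlow
      _ = 16 := by norm_num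
  rw [lowWeight, if_neg hlow, sq_abs, mul_comm]
  gcongr

end FrequencyEstimates

section BilinearKernel

/-- The multiplier of the bilinear estimate once the weights of the three norms, apart from the
exponential ones, have been moved to one side; `p` is the output frequency and `q`, `p - q` are
the input frequencies. -/
noncomputable def bilinearKernel (a₁ a₂ s b b' : ℝ) (p q : ℝ × ℝ) : ℝ :=
  |p.2| * frequencyRatio p.2 q.2 ^ (-s) *
    (modulation a₂ p ^ (b' - 1) * (modulation a₁ q ^ (-b) * modulation a₂ (p - q) ^ (-b)))

lemma sq_rpow_le_rpow {x r t : ℝ} (hx : 1 ≤ x) (hrt : r * 2 ≤ t) : (x ^ r) ^ 2 ≤ x ^ t := by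
  rw [← Real.rpow_mul_natCast (by linarith), Nat.cast_ofNat]
  exact Real.rpow_le_rpow_of_exponent_le hx hrt

lemma sq_bilinearKernel_le {δ s b' : ℝ} (hs : -(3 / 4) + 3 / 2 * δ ≤ s)
    (hb' : b' - 1 ≤ -((1 - δ) / 2)) (a₁ a₂ b : ℝ) (p q : ℝ × ℝ) :
    bilinearKernel a₁ a₂ s b b' p q ^ 2 ≤
      |p.2| ^ 2 * frequencyRatio p.2 q.2 ^ (3 / 2 - 3 * δ) * (modulation a₂ p ^ (-(1 - δ)) *
        (modulation a₁ q ^ (-(2 * b)) * modulation a₂ (p - q) ^ (-(2 * b)))) := by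
  have hQ := one_le_frequencyRatio p.2 q.2
  have hL := one_le_modulation a₂ p
  have hL₁ := one_le_modulation a₁ q
  have hL₂ := one_le_modulation a₂ (p - q)
  simp only [bilinearKernel, mul_pow]
  gcongr <;> exact sq_rpow_le_rpow ‹_› (by linarith)

lemma sq_bracket_high_le_highWeight {c δ β ξ ξ₁ L L₁ L₂ : ℝ} (hc : 0 < c) (hδ₀ : 0 ≤ δ)
    (hδ : δ ≤ 1 / 4) (hβ : 1 ≤ β) (hξ₁ : 1 ≤ |ξ₁|) (hξ₂ : 1 ≤ |ξ - ξ₁|) (hL : 0 < L)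
    (hL₁ : 0 < L₁) (hL₂ : 0 < L₂) (hres : c * (|ξ| * |ξ₁| * |ξ - ξ₁|) ≤ L + L₁ + L₂) :
    |ξ| ^ 2 * frequencyRatio ξ ξ₁ ^ (3 / 2 - 3 * δ) *
        (L ^ (-(1 - δ)) * (L₁ ^ (-β) * L₂ ^ (-β))) ≤
      8 * (c / 3) ^ (-(1 - δ)) * highWeight ξ ξ₁ *
        (L₁ ^ (-β) * L₂ ^ (-β) + L ^ (-β) * L₂ ^ (-β) + L ^ (-β) * L₁ ^ (-β)) := by
  rcases eq_or_ne ξ 0 with rfl | hξ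
  · have := highWeight_nonneg 0 ξ₁
    rw [abs_zero, zero_pow two_ne_zero, zero_mul, zero_mul]
    positivity
  have hprod : 0 < |ξ| * |ξ₁| * |ξ - ξ₁| := by positivity
  have hQ : 0 ≤ frequencyRatio ξ ξ₁ := zero_le_one.trans (one_le_frequencyRatio ξ ξ₁)
  have htrade := rpow_neg_mul_rpow_neg_mul_rpow_neg_le (k := c / 3 * (|ξ| * |ξ₁| * |ξ - ξ₁|))
    (by positivity) hL hL₁ hL₂ (by linarith) (by linarith : 0 ≤ 1 - δ) (by linarith : 1 - δ ≤ β)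
  have hfreq := sq_mul_frequencyRatio_rpow_mul_le_highWeight hδ₀ hδ hξ₁ hξ₂
  set R := L₁ ^ (-β) * L₂ ^ (-β) + L ^ (-β) * L₂ ^ (-β) + L ^ (-β) * L₁ ^ (-β)
  calc |ξ| ^ 2 * frequencyRatio ξ ξ₁ ^ (3 / 2 - 3 * δ) *
        (L ^ (-(1 - δ)) * (L₁ ^ (-β) * L₂ ^ (-β)))
      ≤ |ξ| ^ 2 * frequencyRatio ξ ξ₁ ^ (3 / 2 - 3 * δ) *
          ((c / 3 * (|ξ| * |ξ₁| * |ξ - ξ₁|)) ^ (-(1 - δ)) * R) := by gcongr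
    _ = |ξ| ^ 2 * frequencyRatio ξ ξ₁ ^ (3 / 2 - 3 * δ) *
          (|ξ| * |ξ₁| * |ξ - ξ₁|) ^ (-(1 - δ)) * ((c / 3) ^ (-(1 - δ)) * R) := by
        rw [Real.mul_rpow (by positivity) hprod.le]
        ring
    _ ≤ 8 * highWeight ξ ξ₁ * ((c / 3) ^ (-(1 - δ)) * R) := by gcongr
    _ = 8 * (c / 3) ^ (-(1 - δ)) * highWeight ξ ξ₁ * R := by ring

variable {a₁ a₂ s δ : ℝ}

lemma exists_sq_bilinearKernel_le_add_phaseKernel (ha₁ : a₁ ≠ 0) (ha₂ : a₂ ≠ 0)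
    (hratio : a₂ / a₁ < 0 ∨ a₂ / a₁ = 1 ∨ 4 < a₂ / a₁) (hδ₀ : 0 ≤ δ) (hδ : δ ≤ 1 / 4)
    (hs : -(3 / 4) + 3 / 2 * δ ≤ s) :
    ∃ C, 0 ≤ C ∧ ∀ b b', 1 / 2 ≤ b → b' - 1 ≤ -((1 - δ) / 2) → ∀ p q : ℝ × ℝ,
      bilinearKernel a₁ a₂ s b b' p q ^ 2 ≤
        phaseKernel a₁ a₂ (2 * b) (fun x y => C * (highWeight x y + lowWeight x y)) p q +
        phaseKernel a₂ a₂ (2 * b) (fun x y => C * highWeight y x) q p +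
        phaseKernel a₂ a₁ (2 * b) (fun x y => C * highWeight y x) (p - q) p := by
  obtain ⟨c, hc, hres⟩ := exists_mul_abs_le_abs_resonance ha₁ ha₂ hratio
  refine ⟨8 * (c / 3) ^ (-(1 - δ)) + 16, by positivity, fun b b' hb hb' p q => ?_⟩
  have hL := one_le_modulation a₂ p
  have hL₁ := modulation_pos a₁ q
  have hL₂ := modulation_pos a₂ (p - q)
  have hpow : 0 ≤ (c / 3) ^ (-(1 - δ)) := by positivity
  refine (sq_bilinearKernel_le hs hb' a₁ a₂ b p q).trans ?_
  simp only [phaseKernel, ← neg_sub p q, modulation_neg, sub_sub_cancel, Prod.snd_sub,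
    highWeight_sub_right]
  by_cases hhigh : 1 ≤ |q.2| ∧ 1 ≤ |p.2 - q.2|
  · refine (sq_bracket_high_le_highWeight hc hδ₀ hδ (by linarith) hhigh.1 hhigh.2
      (by linarith) hL₁ hL₂ ((hres p.2 q.2).trans (abs_resonance_le a₁ a₂ p q))).trans ?_
    rw [lowWeight, if_pos hhigh, add_zero, ← mul_add, ← mul_add]
    have := highWeight_nonneg p.2 q.2
    gcongr
    linarith
  · rw [highWeight, if_neg hhigh]
    simp only [mul_zero, zero_mul, add_zero, zero_add]
    have hlow := sq_mul_frequencyRatio_rpow_le_lowWeight hδ₀ hhigh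
    have := lowWeight_nonneg p.2 q.2
    calc |p.2| ^ 2 * frequencyRatio p.2 q.2 ^ (3 / 2 - 3 * δ) * (modulation a₂ p ^ (-(1 - δ)) *
          (modulation a₁ q ^ (-(2 * b)) * modulation a₂ (p - q) ^ (-(2 * b))))
        ≤ 16 * lowWeight p.2 q.2 * (1 *
          (modulation a₁ q ^ (-(2 * b)) * modulation a₂ (p - q) ^ (-(2 * b)))) := by
          gcongr
          exact Real.rpow_le_one_of_one_le_of_nonpos hL (by linarith)
      _ ≤ _ := by
          rw [one_mul]
          gcongr
          linarith

lemma exists_eLpNorm_weightedConv_bilinearKernel_le (ha₁ : a₁ ≠ 0) (ha₂ : a₂ ≠ 0)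
    (hratio : a₂ / a₁ < 0 ∨ a₂ / a₁ = 1 ∨ 4 < a₂ / a₁) (hδ₀ : 0 ≤ δ) (hδ : δ ≤ 1 / 4)
    (hs : -(3 / 4) + 3 / 2 * δ ≤ s) {b : ℝ} (hb : 1 / 2 < b) :
    ∃ C : ℝ≥0∞, C ≠ ∞ ∧ ∀ b', b' - 1 ≤ -((1 - δ) / 2) → ∀ F H : ℝ × ℝ → ℝ≥0∞,
      Measurable F → Measurable H →
        eLpNorm (weightedConv volume
          (fun p q => ENNReal.ofReal (bilinearKernel a₁ a₂ s b b' p q)) F H) 2 volume ≤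
          C * (eLpNorm F 2 volume * eLpNorm H 2 volume) := by
  obtain ⟨K, hK, hsq⟩ :=
    exists_sq_bilinearKernel_le_add_phaseKernel ha₁ ha₂ hratio hδ₀ hδ hs
  have hhigh : Measurable (Function.uncurry fun x y => K * highWeight y x) :=
    (measurable_highWeight.comp measurable_swap).const_mul K
  have hsum : Measurable (Function.uncurry fun x y => K * (highWeight x y + lowWeight x y)) :=
    (measurable_highWeight.add measurable_lowWeight).const_mul K
  obtain ⟨C, hC, hconv⟩ := exists_eLpNorm_weightedConv_le_of_sq_le_phaseKernel
    (((isPhaseAdapted_highWeight ha₁ ha₂).add (isPhaseAdapted_lowWeight ha₁ ha₂)).const_mul hK)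
    ((isPhaseAdapted_highWeight_flip ha₂ ha₂).const_mul hK)
    ((isPhaseAdapted_highWeight_flip ha₂ ha₁).const_mul hK)
    hsum hhigh hhigh (by linarith : 1 < 2 * b)
  exact ⟨C, hC, fun b' hb' F H hF hH => hconv _ F H hF hH (hsq b b' hb.le hb')⟩

end BilinearKernel

section GevreyWeight

/-- The square root of the weight in the norm of `X_a^{σ,s,b}`. -/
noncomputable def gevreyWeight (a σ s b : ℝ) (p : ℝ × ℝ) : ℝ :=
  Real.exp (σ * |p.2|) * (1 + |p.2|) ^ s * modulation a p ^ b

variable {a σ s b : ℝ}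

lemma gevreyWeight_nonneg (a σ s b : ℝ) (p : ℝ × ℝ) : 0 ≤ gevreyWeight a σ s b p := by
  have := modulation_pos a p
  unfold gevreyWeight
  positivity

lemma measurable_gevreyWeight (a σ s b : ℝ) : Measurable (gevreyWeight a σ s b) := by
  have := measurable_modulation a
  unfold gevreyWeight
  fun_prop

lemma ofReal_gevreyWeight_sq (a σ s b τ ξ : ℝ) (z : ℂ) :
    ENNReal.ofReal (Real.exp (2 * σ * |ξ|) * (1 + |ξ|) ^ (2 * s) *
        (1 + |τ - a * ξ ^ 3|) ^ (2 * b) * ‖z‖ ^ 2) =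
      (ENNReal.ofReal (gevreyWeight a σ s b (τ, ξ)) * ‖z‖ₑ) ^ 2 := by
  have hrpow {x : ℝ} (hx : 0 ≤ x) (r : ℝ) : x ^ (2 * r) = (x ^ r) ^ 2 := by
    rw [mul_comm, Real.rpow_mul hx, Real.rpow_two]
  have hexp : Real.exp (2 * σ * |ξ|) = Real.exp (σ * |ξ|) ^ 2 := by
    rw [← Real.exp_nat_mul, Nat.cast_ofNat, mul_assoc]
  rw [← ofReal_norm, ← ENNReal.ofReal_mul (gevreyWeight_nonneg _ _ _ _ _),
    ← ENNReal.ofReal_pow (mul_nonneg (gevreyWeight_nonneg _ _ _ _ _) (norm_nonneg z)),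
    hexp, hrpow (by positivity), hrpow (by positivity), gevreyWeight, modulation]
  congr 1
  ring

/-- The quantity whose `L²` norm is the norm of `f` in `X_a^{σ,s,b}`. -/
noncomputable def weightedFourier (a σ s b : ℝ) (f : ℝ → ℝ → ℂ) (p : ℝ × ℝ) : ℝ≥0∞ :=
  ENNReal.ofReal (gevreyWeight a σ s b p) * ‖FT2 f p.1 p.2‖ₑ

lemma measurable_weightedFourier (a σ s b : ℝ) {f : ℝ → ℝ → ℂ}
    (hf : Measurable (Function.uncurry f)) : Measurable (weightedFourier a σ s b f) :=
  (measurable_gevreyWeight a σ s b).ennreal_ofReal.mul (measurable_FT2 hf).enorm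

lemma XNorm_eq_eLpNorm {f : ℝ → ℝ → ℂ} (hf : Measurable (Function.uncurry f)) :
    XNorm a σ s b f = eLpNorm (weightedFourier a σ s b f) 2 volume := by
  have hmeas := measurable_weightedFourier a σ s b hf
  have hsqrt (x : ℝ≥0∞) : x = (x ^ 2) ^ (1 / 2 : ℝ) := by simp [← ENNReal.rpow_natCast_mul]
  rw [hsqrt (eLpNorm _ _ _), eLpNorm_two_sq, Measure.volume_eq_prod,
    lintegral_prod _ (hmeas.pow_const 2).aemeasurable, XNorm]
  simp only [ofReal_gevreyWeight_sq, weightedFourier]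

lemma frequencyRatio_rpow_neg_mul (s ξ ξ₁ : ℝ) :
    frequencyRatio ξ ξ₁ ^ (-s) * ((1 + |ξ₁|) ^ s * (1 + |ξ - ξ₁|) ^ s) = (1 + |ξ|) ^ s := by
  have hpos : 0 < (1 + |ξ₁|) * (1 + |ξ - ξ₁|) := by positivity
  rw [frequencyRatio, Real.rpow_neg (by positivity), ← Real.inv_rpow (by positivity), inv_div,
    ← Real.mul_rpow (by positivity) (by positivity),
    ← Real.mul_rpow (by positivity) (by positivity), div_mul_cancel₀ _ hpos.ne']

lemma abs_mul_gevreyWeight_le (hσ : 0 ≤ σ) (a₁ a₂ s b b' : ℝ) (p q : ℝ × ℝ) :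
    |p.2| * gevreyWeight a₂ σ s (b' - 1) p ≤ bilinearKernel a₁ a₂ s b b' p q *
      (gevreyWeight a₁ σ s b q * gevreyWeight a₂ σ s b (p - q)) := by
  have hL := modulation_pos a₂ p
  have hcancel (a : ℝ) (r : ℝ × ℝ) : modulation a r ^ (-b) * modulation a r ^ b = 1 := by
    rw [← Real.rpow_add (modulation_pos a r), neg_add_cancel, Real.rpow_zero]
  have hexp : Real.exp (σ * |p.2|) ≤ Real.exp (σ * |q.2|) * Real.exp (σ * |p.2 - q.2|) := by
    rw [← Real.exp_add, ← mul_add]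
    gcongr
    linarith [abs_sub_abs_le_abs_sub p.2 q.2]
  calc |p.2| * gevreyWeight a₂ σ s (b' - 1) p
      = |p.2| * (1 + |p.2|) ^ s * modulation a₂ p ^ (b' - 1) * Real.exp (σ * |p.2|) := by
        rw [gevreyWeight]
        ring
    _ ≤ |p.2| * (1 + |p.2|) ^ s * modulation a₂ p ^ (b' - 1) *
          (Real.exp (σ * |q.2|) * Real.exp (σ * |p.2 - q.2|)) := by gcongr
    _ = |p.2| * (frequencyRatio p.2 q.2 ^ (-s) * ((1 + |q.2|) ^ s * (1 + |p.2 - q.2|) ^ s)) *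
          (modulation a₂ p ^ (b' - 1) * ((modulation a₁ q ^ (-b) * modulation a₁ q ^ b) *
            (modulation a₂ (p - q) ^ (-b) * modulation a₂ (p - q) ^ b))) *
          (Real.exp (σ * |q.2|) * Real.exp (σ * |p.2 - q.2|)) := by
        rw [frequencyRatio_rpow_neg_mul, hcancel, hcancel]
        ring
    _ = bilinearKernel a₁ a₂ s b b' p q *
          (gevreyWeight a₁ σ s b q * gevreyWeight a₂ σ s b (p - q)) := by
        rw [bilinearKernel, gevreyWeight, gevreyWeight, Prod.snd_sub]
        ring

open scoped SchwartzMap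

lemma weightedFourier_deriv_mul_le (hσ : 0 ≤ σ) (a₁ a₂ s b b' : ℝ) (f g : 𝓢(ℝ × ℝ, ℂ))
    (p : ℝ × ℝ) :
    weightedFourier a₂ σ s (b' - 1) (fun t x => deriv (fun y => f (t, y) * g (t, y)) x) p ≤
      weightedConv volume (fun p q => ENNReal.ofReal (bilinearKernel a₁ a₂ s b b' p q))
        (weightedFourier a₁ σ s b fun t x => f (t, x))
        (weightedFourier a₂ σ s b fun t x => g (t, x)) p := by
  have hweight (q : ℝ × ℝ) : ENNReal.ofReal (gevreyWeight a₂ σ s (b' - 1) p) *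
      ENNReal.ofReal |p.2| ≤ ENNReal.ofReal (bilinearKernel a₁ a₂ s b b' p q) *
        (ENNReal.ofReal (gevreyWeight a₁ σ s b q) *
          ENNReal.ofReal (gevreyWeight a₂ σ s b (p - q))) := by
    have h₁ := gevreyWeight_nonneg a₁ σ s b q
    have h₂ := gevreyWeight_nonneg a₂ σ s b (p - q)
    rw [← ENNReal.ofReal_mul (gevreyWeight_nonneg _ _ _ _ _), ← ENNReal.ofReal_mul h₁,
      ← ENNReal.ofReal_mul' (mul_nonneg h₁ h₂), mul_comm]
    exact ENNReal.ofReal_le_ofReal (abs_mul_gevreyWeight_le hσ a₁ a₂ s b b' p q)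
  calc weightedFourier a₂ σ s (b' - 1) (fun t x => deriv (fun y => f (t, y) * g (t, y)) x) p
      ≤ ENNReal.ofReal (gevreyWeight a₂ σ s (b' - 1) p) * (ENNReal.ofReal |p.2| *
          ∫⁻ q : ℝ × ℝ, ‖FT2 (fun t x => f (t, x)) q.1 q.2‖ₑ *
            ‖FT2 (fun t x => g (t, x)) (p - q).1 (p - q).2‖ₑ) :=
        mul_le_mul_right (enorm_FT2_deriv_mul_le f g p) _
    _ = ∫⁻ q : ℝ × ℝ, ENNReal.ofReal (gevreyWeight a₂ σ s (b' - 1) p) * ENNReal.ofReal |p.2| *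
          (‖FT2 (fun t x => f (t, x)) q.1 q.2‖ₑ *
            ‖FT2 (fun t x => g (t, x)) (p - q).1 (p - q).2‖ₑ) := by
        rw [← mul_assoc, lintegral_const_mul' _ _ (by finiteness)]
    _ ≤ _ := lintegral_mono fun q => (mul_le_mul_left (hweight q) _).trans_eq <| by
        simp only [weightedFourier]
        ring

lemma measurable_deriv_mul (f g : 𝓢(ℝ × ℝ, ℂ)) :
    Measurable (Function.uncurry fun t x => deriv (fun y => f (t, y) * g (t, y)) x) :=
  measurable_deriv_with_param (f := fun t y => f (t, y) * g (t, y))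
    (f.continuous.mul g.continuous)

end GevreyWeight

/-- Bilinear estimate (3.3): for `a₁, a₂ ≠ 0` with `a₂/a₁ < 0`, `a₂/a₁ = 1` or
`a₂/a₁ > 4`, and `s > −3/4`, there exist `b ∈ (1/2,1)`, `ε > 0` and `C > 0`
such that for all `σ ≥ 0`, all `b' ∈ [b, b+ε)` and all Schwartz `f, g`:
`‖∂_x(fg)‖_{X_{a₂}^{σ,s,b'−1}} ≤ C ‖f‖_{X_{a₁}^{σ,s,b}} ‖g‖_{X_{a₂}^{σ,s,b}}`. -/
theorem bilinear_uv_div (a₁ a₂ s : ℝ) (ha₁ : a₁ ≠ 0) (ha₂ : a₂ ≠ 0)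
    (hratio : a₂ / a₁ < 0 ∨ a₂ / a₁ = 1 ∨ 4 < a₂ / a₁) (hs : -(3/4) < s) :
    ∃ b ∈ Set.Ioo (1/2 : ℝ) 1, ∃ ε : ℝ, 0 < ε ∧ ∃ C : ℝ, 0 < C ∧
      ∀ σ : ℝ, 0 ≤ σ → ∀ b' ∈ Set.Ico b (b + ε),
        ∀ f g : SchwartzMap (ℝ × ℝ) ℂ,
          XNorm a₂ σ s (b' - 1) (fun t x => deriv (fun y => f (t, y) * g (t, y)) x) ≤
            ENNReal.ofReal C *
              (XNorm a₁ σ s b (fun t x => f (t, x)) * XNorm a₂ σ s b (fun t x => g (t, x))) := by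
  obtain ⟨δ, hδ₀, hδ, hδs⟩ : ∃ δ : ℝ, 0 < δ ∧ δ ≤ 1 / 4 ∧ -(3 / 4) + 3 / 2 * δ ≤ s := by
    refine ⟨min (1 / 4) (2 / 3 * (s + 3 / 4)), lt_min (by norm_num) (by linarith),
      min_le_left _ _, ?_⟩
    linarith [min_le_right (1 / 4) (2 / 3 * (s + 3 / 4))]
  obtain ⟨C, hC, hconv⟩ := exists_eLpNorm_weightedConv_bilinearKernel_le ha₁ ha₂ hratio hδ₀.le
    hδ hδs (by linarith : 1 / 2 < 1 / 2 + δ / 4)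
  refine ⟨1 / 2 + δ / 4, ⟨by linarith, by linarith⟩, δ / 4, by linarith, C.toReal + 1,
    by positivity, fun σ hσ b' hb' f g => ?_⟩
  have hf : Measurable (Function.uncurry fun t x => f (t, x)) := f.continuous.measurable
  have hg : Measurable (Function.uncurry fun t x => g (t, x)) := g.continuous.measurable
  have hC_le : C ≤ ENNReal.ofReal (C.toReal + 1) :=
    (ENNReal.le_ofReal_iff_toReal_le hC (by positivity)).2 (by linarith)
  rw [XNorm_eq_eLpNorm (measurable_deriv_mul f g), XNorm_eq_eLpNorm hf, XNorm_eq_eLpNorm hg]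
  calc _ ≤ eLpNorm (weightedConv volume _ _ _) 2 volume :=
        eLpNorm_mono_enorm (weightedFourier_deriv_mul_le hσ a₁ a₂ s (1 / 2 + δ / 4) b' f g)
    _ ≤ C * _ := hconv b' (by linarith [hb'.2]) _ _ (measurable_weightedFourier a₁ σ s _ hf)
        (measurable_weightedFourier a₂ σ s _ hg)
    _ ≤ _ := mul_le_mul_left hC_le _
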